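/- Fix a positive integer k. Then, as h → 0 with ε = ε(h) → 0 and ε(h)/√h → ∞, one has E( J_h^{2k}·1_{|σW_h + J_h| ≤ ε} ) = ((C₊+C₋)/(2k−Y))·h·ε^{2k−Y} + O(h²·ε^{2k−Y−2}) + O(h·ε^{2k−Y/2}). -/

import Mathlib

open MeasureTheory ProbabilityTheory Filter Asymptotics Set
open scoped Topology NNReal ENNReal Real

noncomputable section

/-- The Lévy density `s(x) = (C₊·1_{x>0} + C₋·1_{x<0})·q(x)·|x|^{−1−Y}`. -/
def levyDensity (Y Cp Cm : ℝ) (q : ℝ → ℝ) (x : ℝ) : ℝ :=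
  (if 0 < x then Cp else if x < 0 then Cm else 0) * q x * |x| ^ (-1 - Y)

/-- The Lévy measure `ν(dx) = s(x) dx`. -/
def levyMeasure (Y Cp Cm : ℝ) (q : ℝ → ℝ) : Measure ℝ :=
  volume.withDensity fun x => ENNReal.ofReal (levyDensity Y Cp Cm q x)

/-- The Lévy exponent `ψ_J(u) = ibu + ∫ (e^{iux} − 1 − iux·1_{|x|≤1}) ν(dx)`. -/
def psiJ (b Y Cp Cm : ℝ) (q : ℝ → ℝ) (u : ℝ) : ℂ :=
  Complex.I * b * u +
    ∫ x : ℝ,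
      (Complex.exp (Complex.I * u * x) - 1 - (if |x| ≤ 1 then Complex.I * u * x else 0))
      ∂(levyMeasure Y Cp Cm q)

/-- The scale parameter `ς = ((C₊+C₋)Γ(−Y)|cos(πY/2)|)^{1/Y}`. -/
def varsigma (Y Cp Cm : ℝ) : ℝ :=
  ((Cp + Cm) * Real.Gamma (-Y) * |Real.cos (π * Y / 2)|) ^ (1 / Y)

/-- The stable part of the Lévy exponent:
`ς^Y |u|^Y (1 − iβ·sgn(u)·tan(πY/2))` with `β = (C₊−C₋)/(C₊+C₋)`. -/
def stablePart (Y Cp Cm : ℝ) (u : ℝ) : ℂ :=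
  (varsigma Y Cp Cm ^ Y * |u| ^ Y : ℝ) *
    (1 - Complex.I * ((Cp - Cm) / (Cp + Cm)) * Real.sign u * Real.tan (π * Y / 2))

/-- Characteristic function of `X̃_h`, the time-`h` marginal of a Brownian motion with
variance `σ²` plus an independent strictly `Y`-stable process. -/
def tildeCF (σ Y Cp Cm : ℝ) (h u : ℝ) : ℂ :=
  Complex.exp (-(σ ^ 2 * u ^ 2 * h / 2) - h * stablePart Y Cp Cm u)

/-!
Divide by `ε`. At the unit scale `J_h / ε` is infinitely divisible with a Lévy density close to
`t` times the stable density, where `t = h ε^{-Y}` is small, and the Gaussian part has standard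
deviation `r = σ√h / ε`. For a fixed Gaussian shift `w`, a smooth cutoff splits the jumps into a
compound Poisson law of big jumps and a law `ν` of small jumps. A second order expansion in Fourier
space shows that `ν` differs from a point mass by `O(t)` against smooth functions, so to first order
in `t` only a single big jump matters. The truncated power is not smooth at `|w + v| = 1`, but there
it is only ever convolved with the stable density, which is smooth away from `0`. The result is `t`
times the integral of the truncated power against the stable density, up to `O(t²)` and an error
from `q - 1`, which is `O(tε)` by the Taylor hypothesis.

That integral is a smooth function of the shift, and the Gaussian law is symmetric, so the term
linear in `w` cancels on averaging and the shift contributes only `O(t r²) = O(t h ε^{-2})`.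
-/

/-! ### Compound Poisson laws -/

section Convolution

variable {M : Type*} [AddMonoid M] [MeasurableSpace M]

/-- The `n`-th convolution power of `μ`. -/
def convPow (μ : Measure M) : ℕ → Measure M
  | 0 => Measure.dirac 0
  | n + 1 => μ.conv (convPow μ n)

/-- The compound Poisson law with finite Lévy measure `μ`, i.e. the law of the sum of a Poisson
number of independent jumps: `e^{-μ(M)} ∑ₙ μ^{*n} / n!`. -/
def compoundPoisson (μ : Measure M) : Measure M :=
  Measure.sum fun n : ℕ =>
    ENNReal.ofReal (Real.exp (-μ.real univ) / n.factorial) • convPow μ n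

lemma hasSum_integral_compoundPoisson {μ : Measure M} {E : Type*} [NormedAddCommGroup E]
    [NormedSpace ℝ E] {f : M → E} (hf : Integrable f (compoundPoisson μ)) :
    HasSum (fun n : ℕ => (Real.exp (-μ.real univ) / n.factorial) • ∫ x, f x ∂convPow μ n)
      (∫ x, f x ∂compoundPoisson μ) := by
  rw [compoundPoisson] at hf ⊢
  convert hasSum_integral_measure hf using 2 with n
  rw [integral_smul_measure, ENNReal.toReal_ofReal (by positivity)]

variable [MeasurableAdd₂ M]

instance isFiniteMeasure_convPow (μ : Measure M) [IsFiniteMeasure μ] (n : ℕ) :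
    IsFiniteMeasure (convPow μ n) := by
  induction n with
  | zero => unfold convPow; infer_instance
  | succ n ih => unfold convPow; infer_instance

lemma measureReal_univ_conv (μ ν : Measure M) [SFinite ν] :
    (μ.conv ν).real univ = μ.real univ * ν.real univ := by
  simp only [Measure.conv, measureReal_def]
  rw [Measure.map_apply measurable_add MeasurableSet.univ, preimage_univ, ← univ_prod_univ,
    Measure.prod_prod, ENNReal.toReal_mul]

lemma measureReal_univ_convPow (μ : Measure M) [IsFiniteMeasure μ] (n : ℕ) :
    (convPow μ n).real univ = μ.real univ ^ n := by
  induction n with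
  | zero => simp [convPow]
  | succ n ih => rw [convPow, measureReal_univ_conv, ih, pow_succ']

variable (μ : Measure M) [IsFiniteMeasure μ]

instance isProbabilityMeasure_compoundPoisson : IsProbabilityMeasure (compoundPoisson μ) := by
  refine ⟨?_⟩
  have h := hasSum_one_poissonMeasure (μ.real univ).toNNReal
  rw [Real.coe_toNNReal _ measureReal_nonneg] at h
  rw [compoundPoisson, Measure.sum_apply _ MeasurableSet.univ, ← ENNReal.ofReal_one, ← h.tsum_eq,
    ENNReal.ofReal_tsum_of_nonneg (fun n => by positivity) h.summable]
  congr with n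
  rw [Measure.smul_apply, smul_eq_mul, ← ofReal_measureReal, ← ENNReal.ofReal_mul (by positivity),
    measureReal_univ_convPow, div_mul_eq_mul_div]

variable {μ} {f : M → ℝ} {C : ℝ}

lemma abs_integral_compoundPoisson_sub_le (hf : Measurable f) (hC : ∀ x, |f x| ≤ C) :
    |∫ x, f x ∂compoundPoisson μ -
        Real.exp (-μ.real univ) * (f 0 + ∫ x, f x ∂μ)| ≤
      C * (1 - Real.exp (-μ.real univ) * (1 + μ.real univ)) := by
  have hC' (x : M) : ‖f x‖ ≤ C := hC x
  set l := μ.real univ with hl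
  have hfi : Integrable f (compoundPoisson μ) :=
    .of_bound hf.aestronglyMeasurable C (ae_of_all _ hC')
  have htail := (hasSum_nat_add_iff' 2).2 (hasSum_integral_compoundPoisson hfi)
  have hmass := hasSum_one_poissonMeasure l.toNNReal
  rw [Real.coe_toNNReal _ measureReal_nonneg] at hmass
  have hbound (n : ℕ) : ‖(Real.exp (-l) / (n + 2).factorial) • ∫ x, f x ∂convPow μ (n + 2)‖ ≤
      C * (Real.exp (-l) * l ^ (n + 2) / (n + 2).factorial) := by
    have h := norm_integral_le_of_norm_le_const (μ := convPow μ (n + 2)) (ae_of_all _ hC')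
    rw [measureReal_univ_convPow] at h
    rw [norm_smul, Real.norm_of_nonneg (by positivity)]
    calc _ ≤ Real.exp (-l) / (n + 2).factorial * (C * l ^ (n + 2)) := by gcongr
      _ = _ := by ring
  have h := tsum_of_norm_bounded (((hasSum_nat_add_iff' 2).2 hmass).mul_left C) hbound
  have h0 : ∫ x, f x ∂convPow μ 0 = f 0 := integral_dirac' _ _ hf.stronglyMeasurable
  have h1 : ∫ x, f x ∂convPow μ 1 = ∫ x, f x ∂μ := by
    rw [convPow, convPow, Measure.conv_dirac_zero]
  rw [htail.tsum_eq, Real.norm_eq_abs] at h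
  simp only [Finset.sum_range_succ, Finset.sum_range_zero, h0, h1, Nat.factorial_zero,
    Nat.factorial_one, Nat.cast_one, div_one, smul_eq_mul, zero_add, pow_zero, pow_one,
    mul_one, ← hl] at h
  convert h using 2 <;> ring

lemma abs_integral_compoundPoisson_sub_le_sq (hf : Measurable f) (hC : ∀ x, |f x| ≤ C) :
    |∫ x, f x ∂compoundPoisson μ - (1 - μ.real univ) * f 0 - ∫ x, f x ∂μ| ≤
      3 * C * μ.real univ ^ 2 := by
  have hmain := abs_integral_compoundPoisson_sub_le (μ := μ) hf hC
  set l := μ.real univ with hl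
  have hl0 : 0 ≤ l := measureReal_nonneg
  have hC0 : 0 ≤ C := (abs_nonneg _).trans (hC 0)
  have hfμ : ‖∫ x, f x ∂μ‖ ≤ C * l :=
    norm_integral_le_of_norm_le_const (ae_of_all _ fun x => (hC x : ‖f x‖ ≤ C))
  have hexp : 1 - l ≤ Real.exp (-l) := by linarith [Real.add_one_le_exp (-l)]
  have hexp1 : Real.exp (-l) ≤ 1 := Real.exp_le_one_iff.2 (by linarith)
  have hexpl : Real.exp (-l) * (1 + l) ≤ 1 := by
    calc _ ≤ Real.exp (-l) * Real.exp l := by gcongr; linarith [Real.add_one_le_exp l]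
      _ = 1 := by rw [← Real.exp_add, neg_add_cancel, Real.exp_zero]
  have hzero : |(Real.exp (-l) - (1 - l)) * f 0| ≤ l ^ 2 * C := by
    rw [abs_mul, abs_of_nonneg (by linarith)]
    exact mul_le_mul (by nlinarith) (hC 0) (abs_nonneg _) (by positivity)
  have hone : |(Real.exp (-l) - 1) * ∫ x, f x ∂μ| ≤ l * (C * l) := by
    rw [abs_mul, abs_sub_comm, abs_of_nonneg (by linarith)]
    exact mul_le_mul (by linarith) hfμ (abs_nonneg _) hl0
  have htwo : C * (1 - Real.exp (-l) * (1 + l)) ≤ C * l ^ 2 :=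
    mul_le_mul_of_nonneg_left (by nlinarith) hC0
  rw [abs_le] at hmain hzero hone ⊢
  constructor <;> nlinarith

end Convolution

section CharFun

variable {E : Type*} [NormedAddCommGroup E] [InnerProductSpace ℝ E] [MeasurableSpace E]
  [BorelSpace E] [SecondCountableTopology E]

lemma charFun_convPow (μ : Measure E) [IsFiniteMeasure μ] (n : ℕ) (t : E) :
    charFun (convPow μ n) t = charFun μ t ^ n := by
  induction n with
  | zero => simp [convPow]
  | succ n ih => rw [convPow, charFun_conv, ih, pow_succ']

lemma charFun_compoundPoisson (μ : Measure E) [IsFiniteMeasure μ] (t : E) :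
    charFun (compoundPoisson μ) t = Complex.exp (charFun μ t - μ.real univ) := by
  have hint : Integrable (fun x : E => Complex.exp (inner ℝ x t * Complex.I))
      (compoundPoisson μ) := .of_bound (by fun_prop) 1 (by simp)
  have hsum := hasSum_integral_compoundPoisson hint
  simp_rw [← charFun_apply, charFun_convPow] at hsum
  have hexp := (NormedSpace.expSeries_div_hasSum_exp (charFun μ t)).mul_left
    (Complex.exp (-μ.real univ))
  rw [← Complex.exp_eq_exp_ℂ, ← Complex.exp_add, neg_add_eq_sub] at hexp
  refine hsum.unique (hexp.congr_fun fun n => ?_)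
  rw [Complex.real_smul]
  push_cast
  ring

lemma exists_isProbabilityMeasure_charFun_eq_of_tendsto [FiniteDimensional ℝ E] {μ : ℕ → Measure E}
    [∀ i, IsProbabilityMeasure (μ i)] {φ : E → ℂ} (hφ : ContinuousAt φ 0)
    (h : ∀ t, Tendsto (fun n => charFun (μ n) t) atTop (𝓝 (φ t))) :
    ∃ ν : Measure E, IsProbabilityMeasure ν ∧ ∀ t, charFun ν t = φ t := by
  let ν : ℕ → ProbabilityMeasure E := fun n => ⟨μ n, inferInstance⟩
  have hcompact : IsCompact (closure (Set.range ν)) := by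
    refine isCompact_closure_of_isTightMeasureSet ?_
    convert isTightMeasureSet_of_tendsto_charFun hφ h using 1
    exact (Set.range_comp _ ν).symm
  obtain ⟨ν', -, i, hi, hν'⟩ :=
    hcompact.tendsto_subseq fun n => subset_closure (Set.mem_range_self (f := ν) n)
  refine ⟨ν', inferInstance, fun t => ?_⟩
  exact tendsto_nhds_unique (ProbabilityMeasure.tendsto_iff_tendsto_charFun.1 hν' t)
    ((h t).comp hi.tendsto_atTop)

end CharFun

/-! ### Laws with square-integrable jumps -/

lemma norm_exp_sub_one_le_of_re_nonpos {z : ℂ} (hz : z.re ≤ 0) : ‖Complex.exp z - 1‖ ≤ ‖z‖ := by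
  have h := (convex_halfSpace_re_le 0).norm_image_sub_le_of_norm_deriv_le
    (f := Complex.exp) (C := 1) (fun w _ => Complex.differentiableAt_exp)
    (fun w hw => by simpa [Complex.norm_exp] using hw) (x := 0) (y := z) (by simp) hz
  simpa using h

lemma norm_exp_sub_one_sub_self_le_of_re_nonpos {z : ℂ} (hz : z.re ≤ 0) :
    ‖Complex.exp z - 1 - z‖ ≤ ‖z‖ ^ 2 := by
  have hbound (w : ℂ) (hw : w ∈ {w : ℂ | w.re ≤ 0} ∩ Metric.closedBall 0 ‖z‖) :
      ‖deriv (fun w => Complex.exp w - w) w‖ ≤ ‖z‖ := by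
    rw [((Complex.hasDerivAt_exp w).fun_sub (hasDerivAt_id' w)).deriv]
    exact (norm_exp_sub_one_le_of_re_nonpos hw.1).trans (mem_closedBall_zero_iff.1 hw.2)
  have h := ((convex_halfSpace_re_le 0).inter (convex_closedBall 0 ‖z‖)
    ).norm_image_sub_le_of_norm_deriv_le (fun w _ => by fun_prop) hbound
    (x := 0) (y := z) (by simp) (by simpa using hz)
  simpa [sq, sub_right_comm] using h

/-- The compensated exponential `e^{iux} - 1 - iux`. -/
def compensatedExp (u x : ℝ) : ℂ := Complex.exp (Complex.I * u * x) - 1 - Complex.I * u * x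

@[fun_prop]
lemma continuous_compensatedExp (u : ℝ) : Continuous (compensatedExp u) := by
  unfold compensatedExp
  fun_prop

lemma norm_compensatedExp_le (u x : ℝ) : ‖compensatedExp u x‖ ≤ u ^ 2 * x ^ 2 := by
  have h := norm_exp_sub_one_sub_self_le_of_re_nonpos (z := Complex.I * u * x) (by simp)
  simpa [compensatedExp, mul_pow] using h

/-- The Lévy exponent `icu + ∫ (e^{iux} - 1 - iux) κ(dx)` of the law with drift `c` and
square-integrable Lévy measure `κ`, all of whose jumps are compensated. -/
def compensatedExponent (c : ℝ) (κ : Measure ℝ) (u : ℝ) : ℂ :=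
  Complex.I * c * u + ∫ x, compensatedExp u x ∂κ

section CompensatedExponent

variable {κ : Measure ℝ} (hκ : Integrable (fun x : ℝ => x ^ 2) κ)

include hκ

lemma integrable_compensatedExp (u : ℝ) : Integrable (compensatedExp u) κ :=
  (hκ.const_mul (u ^ 2)).mono' (by fun_prop) (ae_of_all _ (norm_compensatedExp_le u))

lemma norm_integral_compensatedExp_le (u : ℝ) :
    ‖∫ x, compensatedExp u x ∂κ‖ ≤ u ^ 2 * ∫ x, x ^ 2 ∂κ := by
  rw [← integral_const_mul]
  exact norm_integral_le_of_norm_le (hκ.const_mul _) (ae_of_all _ (norm_compensatedExp_le u))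

lemma norm_compensatedExponent_le (c u : ℝ) :
    ‖compensatedExponent c κ u‖ ≤ (|c| + ∫ x, x ^ 2 ∂κ) * (1 + u ^ 2) := by
  have hdrift : ‖Complex.I * c * u‖ ≤ |c| * (1 + u ^ 2) := by
    rw [norm_mul, norm_mul, Complex.norm_I, one_mul, Complex.norm_real, Complex.norm_real]
    refine mul_le_mul_of_nonneg_left ?_ (abs_nonneg c)
    rw [Real.norm_eq_abs]
    nlinarith [sq_nonneg (|u| - 1), sq_abs u, abs_nonneg u]
  have hsq : 0 ≤ ∫ x, x ^ 2 ∂κ := integral_nonneg fun x => sq_nonneg x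
  refine (norm_add_le _ _).trans ?_
  linarith [norm_integral_compensatedExp_le hκ u]

lemma continuousAt_compensatedExponent_zero (c : ℝ) :
    ContinuousAt (compensatedExponent c κ) 0 := by
  have hint : ContinuousAt (fun u : ℝ => ∫ x, compensatedExp u x ∂κ) 0 := by
    have h0 : ∫ x, compensatedExp 0 x ∂κ = 0 := by simp [compensatedExp]
    rw [ContinuousAt, h0]
    refine squeeze_zero_norm (norm_integral_compensatedExp_le hκ) ?_
    have hcont : Continuous fun u : ℝ => u ^ 2 * ∫ x, x ^ 2 ∂κ := by fun_prop
    simpa using hcont.tendsto 0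
  exact ContinuousAt.add (by fun_prop) hint

lemma isFiniteMeasure_restrict_lt_abs {r : ℝ} (hr : 0 < r) :
    IsFiniteMeasure (κ.restrict {x | r < |x|}) := by
  refine ⟨?_⟩
  rw [Measure.restrict_apply_univ]
  refine (measure_mono fun x (hx : r < |x|) => ?_).trans_lt
    (hκ.measure_norm_gt_lt_top (ε := r ^ 2) (by positivity))
  rw [mem_ofPred_eq, norm_pow, Real.norm_eq_abs]
  gcongr

lemma integrable_id_restrict_lt_abs {r : ℝ} (hr : 0 < r) :
    Integrable (fun x : ℝ => x) (κ.restrict {x | r < |x|}) := by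
  refine ((hκ.restrict (s := {x | r < |x|})).const_mul r⁻¹).mono' (by fun_prop) ?_
  filter_upwards [ae_restrict_mem (measurableSet_lt measurable_const measurable_norm)] with x hx
  rw [Real.norm_eq_abs, ← sq_abs, ← div_eq_inv_mul, le_div_iff₀ hr, sq]
  exact mul_le_mul_of_nonneg_left (le_of_lt hx) (abs_nonneg x)

lemma tendsto_compensatedExponent_restrict_lt_abs (c u : ℝ) :
    Tendsto (fun n : ℕ => compensatedExponent c (κ.restrict {x | 1 / ((n : ℝ) + 1) < |x|}) u)
      atTop (𝓝 (compensatedExponent c κ u)) := by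
  have hmeas (n : ℕ) : MeasurableSet {x : ℝ | 1 / ((n : ℝ) + 1) < |x|} :=
    measurableSet_lt measurable_const measurable_norm
  simp only [compensatedExponent, ← integral_indicator (hmeas _)]
  refine tendsto_const_nhds.add (tendsto_integral_of_dominated_convergence
    (fun x => u ^ 2 * x ^ 2) (fun n => ?_) (hκ.const_mul _) (fun n => ae_of_all _ fun x => ?_)
    (ae_of_all _ fun x => ?_))
  · exact ((integrable_compensatedExp hκ u).indicator (hmeas n)).aestronglyMeasurable
  · exact (norm_indicator_le_norm_self _ _).trans (norm_compensatedExp_le u x)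
  · refine tendsto_const_nhds.congr' ?_
    obtain rfl | hx := eq_or_ne x 0
    · filter_upwards with n
      simp [Set.indicator, compensatedExp]
    · filter_upwards [(tendsto_one_div_add_atTop_nhds_zero_nat (𝕜 := ℝ)).eventually
        (gt_mem_nhds (abs_pos.2 hx))] with n hn
      exact (indicator_of_mem (s := {x : ℝ | 1 / ((n : ℝ) + 1) < |x|}) hn _).symm

end CompensatedExponent

lemma charFun_map_add_compoundPoisson {κ : Measure ℝ} [IsFiniteMeasure κ]
    (hκ : Integrable (fun x : ℝ => x) κ) (c u : ℝ) :
    charFun ((compoundPoisson κ).map (· + (c - ∫ x, x ∂κ))) u =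
      Complex.exp (compensatedExponent c κ u) := by
  have hexp : Integrable (fun x : ℝ => Complex.exp (Complex.I * u * x)) κ :=
    .of_bound (by fun_prop) 1 (ae_of_all _ fun x => by
      rw [mul_assoc, ← Complex.ofReal_mul, Complex.norm_exp_I_mul_ofReal])
  have hint : ∫ x, compensatedExp u x ∂κ =
      charFun κ u - κ.real univ - Complex.I * u * (∫ x, x ∂κ : ℝ) := by
    unfold compensatedExp
    have hlin : Integrable (fun x : ℝ => Complex.I * u * x) κ := hκ.ofReal.const_mul _
    have hsub : Integrable (fun x : ℝ => Complex.exp (Complex.I * u * x) - 1) κ :=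
      hexp.sub (integrable_const _)
    rw [integral_sub hsub hlin, integral_sub hexp (integrable_const _), integral_const_mul,
      integral_complex_ofReal, charFun_apply_real]
    simp [mul_comm, mul_left_comm]
  rw [charFun_map_add_const, charFun_compoundPoisson, ← Complex.exp_add, compensatedExponent, hint]
  congr 1
  simp only [RCLike.inner_apply, conj_trivial]
  push_cast
  ring

lemma exists_charFun_eq_exp_compensatedExponent {κ : Measure ℝ}
    (hκ : Integrable (fun x : ℝ => x ^ 2) κ) (c : ℝ) :
    ∃ ν : Measure ℝ, IsProbabilityMeasure ν ∧
      ∀ u, charFun ν u = Complex.exp (compensatedExponent c κ u) := by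
  have hpos (n : ℕ) : (0 : ℝ) < 1 / (n + 1) := Nat.one_div_pos_of_nat
  have := fun n => isFiniteMeasure_restrict_lt_abs hκ (hpos n)
  let κ' (n : ℕ) := κ.restrict {x | 1 / ((n : ℝ) + 1) < |x|}
  let μ (n : ℕ) := (compoundPoisson (κ' n)).map (· + (c - ∫ x, x ∂κ' n))
  have (n : ℕ) : IsProbabilityMeasure (μ n) := Measure.isProbabilityMeasure_map (by fun_prop)
  refine exists_isProbabilityMeasure_charFun_eq_of_tendsto (μ := μ)
    (continuousAt_compensatedExponent_zero hκ c).cexp fun u => ?_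
  simp only [μ, κ', charFun_map_add_compoundPoisson (integrable_id_restrict_lt_abs hκ (hpos _))]
  exact (tendsto_compensatedExponent_restrict_lt_abs hκ c u).cexp

/-! ### Short-time expansion of smooth functionals by Fourier inversion -/

lemma re_nonpos_of_charFun_eq_exp {m : Measure ℝ} [IsProbabilityMeasure m] {u : ℝ} {z : ℂ}
    (h : charFun m u = Complex.exp z) : z.re ≤ 0 := by
  rw [← Real.exp_le_one_iff, ← Complex.norm_exp, ← h]
  exact norm_charFun_le_one u

section Fourier

open scoped FourierTransform SchwartzMap

lemma norm_exp_I_mul_ofReal_mul_ofReal (u x : ℝ) : ‖Complex.exp (Complex.I * u * x)‖ = 1 := by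
  rw [mul_assoc, ← Complex.ofReal_mul, Complex.norm_exp_I_mul_ofReal]

variable (f : 𝓢(ℝ, ℂ))

lemma schwartz_eq_integral_fourier (x : ℝ) :
    f x = ∫ v : ℝ, 𝓕 f v * Complex.exp (Complex.I * (2 * π * v : ℝ) * x) := by
  have hinv : f x = 𝓕⁻ (⇑(𝓕 f : 𝓢(ℝ, ℂ))) x := by
    rw [← SchwartzMap.fourierInv_coe, FourierTransform.fourierInv_fourier_eq]
  rw [hinv, Real.fourierInv_eq']
  congr with v
  rw [smul_eq_mul, mul_comm, RCLike.inner_apply, conj_trivial]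
  push_cast
  ring_nf

lemma fourier_derivCLM_apply (v : ℝ) :
    𝓕 (SchwartzMap.derivCLM ℂ ℂ f) v = 𝓕 f v * (Complex.I * (2 * π * v : ℝ)) := by
  have hderiv : ⇑(SchwartzMap.derivCLM ℂ ℂ f) = deriv f :=
    funext fun x => SchwartzMap.derivCLM_apply ℂ f x
  rw [SchwartzMap.fourier_coe, hderiv, Real.fourier_deriv f.integrable f.differentiable
    (hderiv ▸ (SchwartzMap.derivCLM ℂ ℂ f).integrable), SchwartzMap.fourier_coe]
  simp only [smul_eq_mul]
  push_cast
  ring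

lemma deriv_zero_eq_integral_fourier :
    deriv f 0 = ∫ v : ℝ, 𝓕 f v * (Complex.I * (2 * π * v : ℝ)) := by
  rw [← SchwartzMap.derivCLM_apply ℂ, schwartz_eq_integral_fourier]
  simp only [fourier_derivCLM_apply, Complex.ofReal_zero, mul_zero, Complex.exp_zero, mul_one]

/-- The weighted norm `∫ (1 + ξ²)² |𝓕 f(ξ / 2π)| dξ / 2π` of a Schwartz function, which controls the
error terms of the short-time expansions. -/
def fourierWeight : ℝ := ∫ v : ℝ, (1 + (2 * π * v) ^ 2) ^ 2 * ‖𝓕 f v‖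

lemma fourierWeight_nonneg : 0 ≤ fourierWeight f := integral_nonneg fun v => by positivity

lemma integrable_fourierWeight : Integrable fun v : ℝ => (1 + (2 * π * v) ^ 2) ^ 2 * ‖𝓕 f v‖ := by
  have h0 := (𝓕 f).integrable_pow_mul volume 0
  have h2 := ((𝓕 f).integrable_pow_mul volume 2).const_mul (2 * (2 * π) ^ 2)
  have h4 := ((𝓕 f).integrable_pow_mul volume 4).const_mul ((2 * π) ^ 4)
  refine (h0.add (h2.add h4)).congr (ae_of_all _ fun v => ?_)
  simp only [Pi.add_apply, Real.norm_eq_abs, sq_abs, (by decide : Even 4).pow_abs]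
  ring

variable {f}

lemma integrable_fourier_mul {φ : ℝ → ℂ} (hφ : AEStronglyMeasurable φ) {D : ℝ}
    (hD : ∀ v, ‖φ v‖ ≤ D * (1 + (2 * π * v) ^ 2) ^ 2) : Integrable fun v => 𝓕 f v * φ v := by
  refine ((integrable_fourierWeight f).const_mul D).mono'
    ((𝓕 f).continuous.aestronglyMeasurable.mul hφ) (ae_of_all _ fun v => ?_)
  rw [norm_mul, ← mul_assoc, mul_comm]
  exact mul_le_mul_of_nonneg_right (hD v) (norm_nonneg _)

lemma norm_integral_fourier_mul_le {φ : ℝ → ℂ} {D : ℝ}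
    (hD : ∀ v, ‖φ v‖ ≤ D * (1 + (2 * π * v) ^ 2) ^ 2) :
    ‖∫ v, 𝓕 f v * φ v‖ ≤ D * fourierWeight f := by
  rw [fourierWeight, ← integral_const_mul]
  refine norm_integral_le_of_norm_le ((integrable_fourierWeight f).const_mul D)
    (ae_of_all _ fun v => ?_)
  rw [norm_mul, ← mul_assoc, mul_comm]
  exact mul_le_mul_of_nonneg_right (hD v) (norm_nonneg _)

lemma integral_schwartz_add_eq (m : Measure ℝ) [IsFiniteMeasure m] (c : ℝ) :
    ∫ x, f (x + c) ∂m = ∫ v : ℝ,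
      𝓕 f v * (Complex.exp (Complex.I * (2 * π * v : ℝ) * c) * charFun m (2 * π * v)) := by
  simp_rw [schwartz_eq_integral_fourier f]
  rw [integral_integral_swap]
  · congr with v
    rw [charFun_apply_real, ← integral_const_mul, ← integral_const_mul]
    congr with x
    rw [← Complex.exp_add]
    push_cast
    ring_nf
  · refine ((integrable_const (1 : ℂ)).mul_prod (𝓕 f).integrable).norm.mono' ?_
      (ae_of_all _ fun p => ?_)
    · have hcont := (𝓕 f).continuous
      exact Continuous.aestronglyMeasurable (by unfold Function.uncurry; fun_prop)
    · rw [Function.uncurry, norm_mul, norm_exp_I_mul_ofReal_mul_ofReal, one_mul, mul_one]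

lemma norm_integral_schwartz_add_sub_le (m : Measure ℝ) [IsFiniteMeasure m] {D : ℝ}
    (hD : ∀ u : ℝ, ‖charFun m u - 1‖ ≤ D * (1 + u ^ 2)) (c : ℝ) :
    ‖∫ x, f (x + c) ∂m - f c‖ ≤ D * fourierWeight f := by
  have hD0 : 0 ≤ D := by simpa using (norm_nonneg _).trans (hD 0)
  have hone (u : ℝ) : 1 + u ^ 2 ≤ (1 + u ^ 2) ^ 2 := le_self_pow₀ (by nlinarith) two_ne_zero
  have hexp : Integrable fun v : ℝ => 𝓕 f v * Complex.exp (Complex.I * (2 * π * v : ℝ) * c) :=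
    integrable_fourier_mul (by fun_prop) (D := 1) fun v => by
      rw [norm_exp_I_mul_ofReal_mul_ofReal]
      nlinarith [hone (2 * π * v), sq_nonneg (2 * π * v)]
  have hchar : Integrable fun v : ℝ => 𝓕 f v *
      (Complex.exp (Complex.I * (2 * π * v : ℝ) * c) * (charFun m (2 * π * v) - 1)) := by
    have : Measurable (charFun m) := measurable_charFun
    refine integrable_fourier_mul (by fun_prop) (D := D) fun v => ?_
    rw [norm_mul, norm_exp_I_mul_ofReal_mul_ofReal, one_mul]
    exact (hD _).trans (mul_le_mul_of_nonneg_left (hone _) hD0)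
  have heq : ∫ x, f (x + c) ∂m - f c = ∫ v : ℝ, 𝓕 f v *
      (Complex.exp (Complex.I * (2 * π * v : ℝ) * c) * (charFun m (2 * π * v) - 1)) := by
    rw [sub_eq_iff_eq_add, integral_schwartz_add_eq, schwartz_eq_integral_fourier f c,
      ← integral_add hchar hexp]
    congr with v
    ring
  rw [heq]
  refine norm_integral_fourier_mul_le fun v => ?_
  rw [norm_mul, norm_exp_I_mul_ofReal_mul_ofReal, one_mul]
  exact (hD _).trans (mul_le_mul_of_nonneg_left (hone _) hD0)

lemma integral_fourier_mul_compensatedExp (x : ℝ) :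
    ∫ v : ℝ, 𝓕 f v * compensatedExp (2 * π * v) x = f x - f 0 - deriv f 0 * x := by
  have hone (v : ℝ) : (2 * π * v) ^ 2 ≤ (1 + (2 * π * v) ^ 2) ^ 2 := by
    nlinarith [sq_nonneg (2 * π * v)]
  have hcomp : Integrable fun v : ℝ => 𝓕 f v * compensatedExp (2 * π * v) x :=
    integrable_fourier_mul (by unfold compensatedExp; fun_prop) (D := x ^ 2) fun v => by
      nlinarith [norm_compensatedExp_le (2 * π * v) x, sq_nonneg x, hone v]
  have hlin : Integrable fun v : ℝ => 𝓕 f v * (Complex.I * (2 * π * v : ℝ)) :=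
    integrable_fourier_mul (by fun_prop) (D := 1) fun v => by
      rw [norm_mul, Complex.norm_I, one_mul, Complex.norm_real, Real.norm_eq_abs]
      nlinarith [sq_nonneg (|2 * π * v| - 1), sq_abs (2 * π * v), sq_nonneg (2 * π * v)]
  have hsum : Integrable fun v : ℝ => 𝓕 f v * compensatedExp (2 * π * v) x +
      𝓕 f v * (Complex.I * (2 * π * v : ℝ)) * x := hcomp.add (hlin.mul_const _)
  rw [eq_sub_iff_add_eq, eq_sub_iff_add_eq, deriv_zero_eq_integral_fourier,
    schwartz_eq_integral_fourier f x, schwartz_eq_integral_fourier f 0, ← integral_mul_const,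
    ← integral_add hcomp (hlin.mul_const _), ← integral_add hsum]
  · congr with v
    simp only [compensatedExp, Complex.ofReal_zero, mul_zero, Complex.exp_zero]
    ring
  · simpa using (𝓕 f).integrable

lemma integrable_fourier_mul_drift (c : ℝ) :
    Integrable fun v : ℝ => 𝓕 f v * (Complex.I * c * (2 * π * v : ℝ)) :=
  integrable_fourier_mul (by fun_prop) (D := |c|) fun v => by
    rw [norm_mul, norm_mul, Complex.norm_I, one_mul, Complex.norm_real, Complex.norm_real,
      Real.norm_eq_abs, Real.norm_eq_abs]
    gcongr
    nlinarith [sq_nonneg (|2 * π * v| - 1), sq_abs (2 * π * v), sq_nonneg (2 * π * v)]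

variable {κ : Measure ℝ} (hκ : Integrable (fun x : ℝ => x ^ 2) κ)

include hκ

lemma integrable_fourier_mul_compensatedExp :
    Integrable (fun p : ℝ × ℝ => 𝓕 f p.1 * compensatedExp (2 * π * p.1) p.2)
      (volume.prod κ) := by
  refine ((integrable_fourierWeight f).mul_prod hκ).mono' ?_ (ae_of_all _ fun p => ?_)
  · have hcont := (𝓕 f).continuous
    exact Continuous.aestronglyMeasurable (by unfold compensatedExp; fun_prop)
  · have hone : (2 * π * p.1) ^ 2 ≤ (1 + (2 * π * p.1) ^ 2) ^ 2 := by
      nlinarith [sq_nonneg (2 * π * p.1)]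
    calc ‖𝓕 f p.1 * compensatedExp (2 * π * p.1) p.2‖
        ≤ ‖𝓕 f p.1‖ * ((2 * π * p.1) ^ 2 * p.2 ^ 2) := by
          rw [norm_mul]
          gcongr
          exact norm_compensatedExp_le _ _
      _ ≤ ‖𝓕 f p.1‖ * ((1 + (2 * π * p.1) ^ 2) ^ 2 * p.2 ^ 2) := by gcongr
      _ = (1 + (2 * π * p.1) ^ 2) ^ 2 * ‖𝓕 f p.1‖ * p.2 ^ 2 := by ring

variable [SFinite κ]

lemma integrable_fourier_mul_compensatedExponent (c : ℝ) :
    Integrable fun v : ℝ => 𝓕 f v * compensatedExponent c κ (2 * π * v) := by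
  have hint := (integrable_fourier_mul_compensatedExp (f := f) hκ).integral_prod_left
  simp only [integral_const_mul] at hint
  simp only [compensatedExponent, mul_add]
  exact (integrable_fourier_mul_drift c).add hint

lemma integral_fourier_mul_compensatedExponent (c : ℝ) :
    ∫ v : ℝ, 𝓕 f v * compensatedExponent c κ (2 * π * v) =
      c * deriv f 0 + ∫ x, (f x - f 0 - deriv f 0 * x) ∂κ := by
  have hint := integrable_fourier_mul_compensatedExp (f := f) hκ
  simp only [compensatedExponent, mul_add]
  rw [integral_add (integrable_fourier_mul_drift c)
    (by simpa only [integral_const_mul] using hint.integral_prod_left),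
    deriv_zero_eq_integral_fourier, ← integral_const_mul]
  congr 1
  · congr with v
    ring
  · simp_rw [← integral_const_mul]
    rw [integral_integral_swap hint]
    simp_rw [integral_fourier_mul_compensatedExp, deriv_zero_eq_integral_fourier]

lemma norm_integral_schwartz_sub_generator_le {m : Measure ℝ} [IsProbabilityMeasure m] {c : ℝ}
    (hm : ∀ u, charFun m u = Complex.exp (compensatedExponent c κ u)) :
    ‖∫ x, f x ∂m - f 0 - (c * deriv f 0 + ∫ x, (f x - f 0 - deriv f 0 * x) ∂κ)‖ ≤
      (|c| + ∫ x, x ^ 2 ∂κ) ^ 2 * fourierWeight f := by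
  set Ψ := compensatedExponent c κ
  have : Continuous (charFun m) := continuous_charFun
  have hbound (v : ℝ) : ‖charFun m (2 * π * v) - 1 - Ψ (2 * π * v)‖ ≤
      (|c| + ∫ x, x ^ 2 ∂κ) ^ 2 * (1 + (2 * π * v) ^ 2) ^ 2 := by
    rw [hm, ← mul_pow]
    refine (norm_exp_sub_one_sub_self_le_of_re_nonpos
      (re_nonpos_of_charFun_eq_exp (hm _))).trans ?_
    gcongr
    exact norm_compensatedExponent_le hκ c _
  have hone : Integrable fun v : ℝ => 𝓕 f v := (𝓕 f).integrable
  have hchar : Integrable fun v : ℝ => 𝓕 f v * charFun m (2 * π * v) :=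
    integrable_fourier_mul (by fun_prop) (D := 1) fun v => by
      nlinarith [norm_charFun_le_one (μ := m) (2 * π * v), sq_nonneg (2 * π * v)]
  have hsub : Integrable fun v : ℝ => 𝓕 f v * charFun m (2 * π * v) - 𝓕 f v := hchar.sub hone
  have heq : ∫ x, f x ∂m - f 0 - (c * deriv f 0 + ∫ x, (f x - f 0 - deriv f 0 * x) ∂κ) =
      ∫ v : ℝ, 𝓕 f v * (charFun m (2 * π * v) - 1 - Ψ (2 * π * v)) := by
    have hm0 := integral_schwartz_add_eq (f := f) m 0
    simp only [add_zero, Complex.ofReal_zero, mul_zero, Complex.exp_zero, one_mul] at hm0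
    rw [← integral_fourier_mul_compensatedExponent hκ, hm0, schwartz_eq_integral_fourier f 0]
    simp only [Complex.ofReal_zero, mul_zero, Complex.exp_zero, mul_one]
    rw [← integral_sub hchar hone,
      ← integral_sub hsub (integrable_fourier_mul_compensatedExponent hκ c)]
    congr with v
    ring
  rw [heq]
  exact norm_integral_fourier_mul_le hbound

end Fourier

section SmoothCompactlySupported

variable {g : ℝ → ℝ} (hg : ContDiff ℝ (⊤ : ℕ∞) g) (hgs : HasCompactSupport g)

include hg hgs

lemma exists_schwartzMap_eq_ofReal : ∃ f : SchwartzMap ℝ ℂ, ∀ x, f x = g x :=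
  have hsupp : HasCompactSupport fun x => (g x : ℂ) := hgs.comp_left Complex.ofReal_zero
  have hsmooth : ContDiff ℝ (⊤ : ℕ∞) fun x => (g x : ℂ) := Complex.ofRealCLM.contDiff.comp hg
  ⟨hsupp.toSchwartzMap hsmooth, fun _ => rfl⟩

lemma exists_abs_integral_add_sub_le :
    ∃ W, 0 ≤ W ∧ ∀ (m : Measure ℝ) [IsFiniteMeasure m] (D : ℝ),
      (∀ u, ‖charFun m u - 1‖ ≤ D * (1 + u ^ 2)) → ∀ c, |∫ x, g (x + c) ∂m - g c| ≤ D * W := by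
  obtain ⟨f, hf⟩ := exists_schwartzMap_eq_ofReal hg hgs
  refine ⟨fourierWeight f, fourierWeight_nonneg f, fun m _ D hD c => ?_⟩
  have h := norm_integral_schwartz_add_sub_le (f := f) m hD c
  simp only [hf, integral_complex_ofReal] at h
  exact_mod_cast h

lemma exists_abs_integral_sub_generator_le :
    ∃ W, 0 ≤ W ∧ ∀ (κ : Measure ℝ) [SFinite κ] (m : Measure ℝ) [IsProbabilityMeasure m] (c : ℝ),
      Integrable (fun x : ℝ => x ^ 2) κ →
      (∀ u, charFun m u = Complex.exp (compensatedExponent c κ u)) →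
      |∫ x, g x ∂m - g 0 - (c * deriv g 0 + ∫ x, (g x - g 0 - deriv g 0 * x) ∂κ)| ≤
        (|c| + ∫ x, x ^ 2 ∂κ) ^ 2 * W := by
  obtain ⟨f, hf⟩ := exists_schwartzMap_eq_ofReal hg hgs
  refine ⟨fourierWeight f, fourierWeight_nonneg f, fun κ _ m _ c hκ hm => ?_⟩
  have hderiv : deriv f 0 = deriv g 0 := by
    rw [show ⇑f = fun x => (g x : ℂ) from funext hf]
    exact ((hg.differentiable (by simp) 0).hasDerivAt.ofReal_comp).deriv
  have h := norm_integral_schwartz_sub_generator_le (f := f) hκ hm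
  have hgen : ∫ x, (f x - f 0 - deriv f 0 * x) ∂κ =
      (∫ x, (g x - g 0 - deriv g 0 * x) ∂κ : ℝ) := by
    rw [← integral_complex_ofReal]
    simp [hf, hderiv]
  rw [hgen, hderiv] at h
  simp only [hf, integral_complex_ofReal] at h
  exact_mod_cast h

end SmoothCompactlySupported

/-! ### Splitting off the small jumps -/

/-- The measure on `ℝ` with Lebesgue density `a`. -/
def densityMeasure (a : ℝ → ℝ) : Measure ℝ := volume.withDensity fun v => ENNReal.ofReal (a v)

instance (a : ℝ → ℝ) : SFinite (densityMeasure a) := by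
  unfold densityMeasure
  infer_instance

section DensityMeasure

variable {a : ℝ → ℝ} (ha : Measurable a) (ha0 : ∀ v, 0 ≤ a v)
  {E : Type*} [NormedAddCommGroup E] [NormedSpace ℝ E]

include ha ha0

lemma integral_densityMeasure (f : ℝ → E) : ∫ v, f v ∂densityMeasure a = ∫ v, a v • f v := by
  rw [densityMeasure, integral_withDensity_eq_integral_toReal_smul (by fun_prop) (by simp)]
  simp only [ENNReal.toReal_ofReal (ha0 _)]

lemma integrable_densityMeasure_iff {f : ℝ → E} :
    Integrable f (densityMeasure a) ↔ Integrable fun v => a v • f v := by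
  rw [densityMeasure, integrable_withDensity_iff_integrable_smul' (by fun_prop) (by simp)]
  simp only [ENNReal.toReal_ofReal (ha0 _)]

lemma isFiniteMeasure_densityMeasure (hint : Integrable a) :
    IsFiniteMeasure (densityMeasure a) := by
  rw [← integrable_const_iff_isFiniteMeasure (one_ne_zero (α := ℝ)),
    integrable_densityMeasure_iff ha ha0]
  simpa using hint

lemma measureReal_univ_densityMeasure : (densityMeasure a).real univ = ∫ v, a v := by
  have h := integral_densityMeasure ha ha0 fun _ => (1 : ℝ)
  simpa using h

end DensityMeasure

/-- The weight `min(1, v²)` that every Lévy measure integrates. -/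
def jumpWeight (v : ℝ) : ℝ := min 1 (v ^ 2)

@[fun_prop]
lemma continuous_jumpWeight : Continuous jumpWeight := by
  unfold jumpWeight
  fun_prop

lemma jumpWeight_nonneg (v : ℝ) : 0 ≤ jumpWeight v := le_min zero_le_one (sq_nonneg v)

lemma jumpWeight_le_one (v : ℝ) : jumpWeight v ≤ 1 := min_le_left _ _

lemma integrable_jumpWeight (ν : Measure ℝ) [IsFiniteMeasure ν] : Integrable jumpWeight ν :=
  .of_bound (by fun_prop) 1 (ae_of_all _ fun v => by
    rw [Real.norm_of_nonneg (jumpWeight_nonneg v)]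
    exact jumpWeight_le_one v)

lemma jumpWeight_of_abs_le_one {v : ℝ} (hv : |v| ≤ 1) : jumpWeight v = v ^ 2 :=
  min_eq_right ((sq_le_one_iff_abs_le_one v).2 hv)

lemma jumpWeight_of_one_le_abs {v : ℝ} (hv : 1 ≤ |v|) : jumpWeight v = 1 :=
  min_eq_left ((one_le_sq_iff_one_le_abs v).2 hv)

/-- The smooth cutoff that separates the small jumps from the big ones. -/
def smallBump : ContDiffBump (0 : ℝ) := ⟨1 / 16, 1 / 8, by norm_num, by norm_num⟩

lemma smallBump_eq_zero {v : ℝ} (hv : 1 / 8 ≤ |v|) : smallBump v = 0 :=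
  smallBump.zero_of_le_dist (by simpa [smallBump] using hv)

lemma smallBump_mul_sq_le (v : ℝ) : smallBump v * v ^ 2 ≤ jumpWeight v := by
  obtain hv | hv := le_total (1 / 8) |v|
  · simp [smallBump_eq_zero hv, jumpWeight_nonneg]
  · rw [jumpWeight_of_abs_le_one (hv.trans (by norm_num))]
    exact mul_le_of_le_one_left (sq_nonneg v) smallBump.le_one

lemma one_sub_smallBump_le (v : ℝ) : 1 - smallBump v ≤ 256 * jumpWeight v := by
  obtain hv | hv := le_total |v| (1 / 16)
  · rw [smallBump.one_of_mem_closedBall (by simpa [smallBump] using hv), sub_self]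
    exact mul_nonneg (by norm_num) (jumpWeight_nonneg v)
  · have hsq : (1 / 16 : ℝ) ^ 2 ≤ v ^ 2 := by rw [← sq_abs v]; gcongr
    have hle : 1 / 256 ≤ jumpWeight v := le_min (by norm_num) (by linarith)
    linarith [smallBump.nonneg (x := v)]

/-- `κ` is the Lebesgue density of a Lévy measure. -/
structure IsLevyDensity (κ : ℝ → ℝ) : Prop where
  measurable : Measurable κ
  nonneg : ∀ v, 0 ≤ κ v
  integrable : Integrable fun v => jumpWeight v * κ v

/-- The Lévy exponent with drift `c` and Lévy density `κ`, where `smallBump` is the truncation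
function. -/
def levyExponent (c : ℝ) (κ : ℝ → ℝ) (u : ℝ) : ℂ :=
  Complex.I * c * u +
    ∫ v, κ v • (Complex.exp (Complex.I * u * v) - 1 - smallBump v * (Complex.I * u * v))

/-- The size of a drift `c` and a Lévy density `κ` in small time: the characteristic function of the
corresponding law differs from `1` by `O(levySize c κ * (1 + u ^ 2))`. -/
def levySize (c : ℝ) (κ : ℝ → ℝ) : ℝ := |c| + ∫ v, jumpWeight v * κ v

/-- The Lévy measure of the jumps of density `κ` kept by `smallBump`. -/
def smallJumps (κ : ℝ → ℝ) : Measure ℝ := densityMeasure fun v => smallBump v * κ v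

/-- The finite Lévy measure of the jumps of density `κ` removed by `smallBump`. -/
def bigJumps (κ : ℝ → ℝ) : Measure ℝ := densityMeasure fun v => (1 - smallBump v) * κ v

instance (κ : ℝ → ℝ) : SFinite (smallJumps κ) := by
  unfold smallJumps
  infer_instance

namespace IsLevyDensity

variable {κ : ℝ → ℝ} (hκ : IsLevyDensity κ)

include hκ

lemma measurable_smallBump_mul : Measurable fun v => smallBump v * κ v :=
  smallBump.continuous.measurable.mul hκ.measurable

lemma smallBump_mul_nonneg (v : ℝ) : 0 ≤ smallBump v * κ v :=
  mul_nonneg smallBump.nonneg (hκ.nonneg v)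

lemma measurable_one_sub_smallBump_mul : Measurable fun v => (1 - smallBump v) * κ v :=
  (smallBump.continuous.measurable.const_sub 1).mul hκ.measurable

lemma one_sub_smallBump_mul_nonneg (v : ℝ) : 0 ≤ (1 - smallBump v) * κ v :=
  mul_nonneg (sub_nonneg.2 smallBump.le_one) (hκ.nonneg v)

lemma integral_smallJumps {E : Type*} [NormedAddCommGroup E] [NormedSpace ℝ E] (f : ℝ → E) :
    ∫ v, f v ∂smallJumps κ = ∫ v, (smallBump v * κ v) • f v :=
  integral_densityMeasure hκ.measurable_smallBump_mul hκ.smallBump_mul_nonneg f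

lemma integral_bigJumps {E : Type*} [NormedAddCommGroup E] [NormedSpace ℝ E] (f : ℝ → E) :
    ∫ v, f v ∂bigJumps κ = ∫ v, ((1 - smallBump v) * κ v) • f v :=
  integral_densityMeasure hκ.measurable_one_sub_smallBump_mul hκ.one_sub_smallBump_mul_nonneg f

lemma norm_mul_le {f : ℝ → ℝ} {M : ℝ} (hM : ∀ v, |f v| ≤ M * jumpWeight v) (v : ℝ) :
    ‖f v * κ v‖ ≤ M * (jumpWeight v * κ v) := by
  rw [norm_mul, Real.norm_eq_abs, Real.norm_of_nonneg (hκ.nonneg v), ← mul_assoc]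
  exact mul_le_mul_of_nonneg_right (hM v) (hκ.nonneg v)

lemma integrable_mul_of_abs_le {f : ℝ → ℝ} (hf : Measurable f) {M : ℝ}
    (hM : ∀ v, |f v| ≤ M * jumpWeight v) : Integrable fun v => f v * κ v :=
  (hκ.integrable.const_mul M).mono' (hf.mul hκ.measurable).aestronglyMeasurable
    (ae_of_all _ (hκ.norm_mul_le hM))

lemma abs_integral_mul_le {f : ℝ → ℝ} {M : ℝ} (hM : ∀ v, |f v| ≤ M * jumpWeight v) :
    |∫ v, f v * κ v| ≤ M * ∫ v, jumpWeight v * κ v := by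
  rw [← integral_const_mul, ← Real.norm_eq_abs]
  exact norm_integral_le_of_norm_le (hκ.integrable.const_mul M)
    (ae_of_all _ (hκ.norm_mul_le hM))

lemma integral_jumpWeight_mul_nonneg : 0 ≤ ∫ v, jumpWeight v * κ v :=
  integral_nonneg fun v => mul_nonneg (jumpWeight_nonneg v) (hκ.nonneg v)

lemma integrable_one_sub_smallBump_mul : Integrable fun v => (1 - smallBump v) * κ v := by
  refine hκ.integrable_mul_of_abs_le (smallBump.continuous.measurable.const_sub 1)
    (M := 256) fun v => ?_
  rw [abs_of_nonneg (sub_nonneg.2 smallBump.le_one)]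
  exact one_sub_smallBump_le v

lemma isFiniteMeasure_bigJumps : IsFiniteMeasure (bigJumps κ) :=
  isFiniteMeasure_densityMeasure hκ.measurable_one_sub_smallBump_mul
    hκ.one_sub_smallBump_mul_nonneg hκ.integrable_one_sub_smallBump_mul

lemma measureReal_univ_bigJumps_le :
    (bigJumps κ).real univ ≤ 256 * ∫ v, jumpWeight v * κ v := by
  rw [bigJumps, measureReal_univ_densityMeasure hκ.measurable_one_sub_smallBump_mul
    hκ.one_sub_smallBump_mul_nonneg]
  refine (le_abs_self _).trans (hκ.abs_integral_mul_le fun v => ?_)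
  rw [abs_of_nonneg (sub_nonneg.2 smallBump.le_one)]
  exact one_sub_smallBump_le v

lemma integrable_sq_smallJumps : Integrable (fun v : ℝ => v ^ 2) (smallJumps κ) := by
  rw [smallJumps, integrable_densityMeasure_iff hκ.measurable_smallBump_mul
    hκ.smallBump_mul_nonneg]
  have hmeas : Measurable fun v => smallBump v * v ^ 2 :=
    smallBump.continuous.measurable.mul (by fun_prop)
  refine (hκ.integrable_mul_of_abs_le hmeas (M := 1) fun v => ?_).congr
    (ae_of_all _ fun v => by simp only [smul_eq_mul]; ring)
  rw [abs_of_nonneg (mul_nonneg smallBump.nonneg (sq_nonneg v)), one_mul]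
  exact smallBump_mul_sq_le v

lemma integral_sq_smallJumps_le : ∫ v, v ^ 2 ∂smallJumps κ ≤ ∫ v, jumpWeight v * κ v := by
  rw [hκ.integral_smallJumps]
  refine integral_mono_of_nonneg (ae_of_all _ fun v => ?_) hκ.integrable (ae_of_all _ fun v => ?_)
  · exact mul_nonneg (hκ.smallBump_mul_nonneg v) (sq_nonneg v)
  · calc (smallBump v * κ v) • v ^ 2 = smallBump v * v ^ 2 * κ v := by rw [smul_eq_mul]; ring
      _ ≤ jumpWeight v * κ v := mul_le_mul_of_nonneg_right (smallBump_mul_sq_le v) (hκ.nonneg v)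

lemma ae_abs_le_smallJumps : ∀ᵐ v ∂smallJumps κ, |v| ≤ 1 / 8 := by
  rw [smallJumps, densityMeasure,
    ae_withDensity_iff hκ.measurable_smallBump_mul.ennreal_ofReal]
  refine ae_of_all _ fun v hv => ?_
  contrapose! hv
  simp [smallBump_eq_zero hv.le]

lemma integrable_exp_bigJumps (u : ℝ) :
    Integrable (fun v : ℝ => Complex.exp (Complex.I * u * v)) (bigJumps κ) :=
  have := hκ.isFiniteMeasure_bigJumps
  .of_bound (by fun_prop) 1 (ae_of_all _ fun x => by rw [norm_exp_I_mul_ofReal_mul_ofReal])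

lemma integrable_smallBump_mul_smul_compensatedExp (u : ℝ) :
    Integrable fun v : ℝ => (smallBump v * κ v) • compensatedExp u v :=
  (integrable_densityMeasure_iff hκ.measurable_smallBump_mul hκ.smallBump_mul_nonneg).1
    (integrable_compensatedExp hκ.integrable_sq_smallJumps u)

lemma integrable_one_sub_smallBump_mul_smul_exp_sub_one (u : ℝ) :
    Integrable fun v : ℝ =>
      ((1 - smallBump v) * κ v) • (Complex.exp (Complex.I * u * v) - 1) :=
  have := hκ.isFiniteMeasure_bigJumps
  (integrable_densityMeasure_iff hκ.measurable_one_sub_smallBump_mul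
    hκ.one_sub_smallBump_mul_nonneg).1 ((hκ.integrable_exp_bigJumps u).sub (integrable_const 1))

omit hκ in
lemma smul_exp_sub_eq_add (u v : ℝ) :
    κ v • (Complex.exp (Complex.I * u * v) - 1 - smallBump v * (Complex.I * u * v)) =
      (smallBump v * κ v) • compensatedExp u v +
        ((1 - smallBump v) * κ v) • (Complex.exp (Complex.I * u * v) - 1) := by
  simp only [compensatedExp, Complex.real_smul]
  push_cast
  ring

lemma integrable_smul_exp_sub (u : ℝ) : Integrable fun v : ℝ =>
    κ v • (Complex.exp (Complex.I * u * v) - 1 - smallBump v * (Complex.I * u * v)) := by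
  simp only [smul_exp_sub_eq_add]
  exact (hκ.integrable_smallBump_mul_smul_compensatedExp u).add
    (hκ.integrable_one_sub_smallBump_mul_smul_exp_sub_one u)

lemma levyExponent_eq (c u : ℝ) : levyExponent c κ u =
    compensatedExponent c (smallJumps κ) u +
      (charFun (bigJumps κ) u - (bigJumps κ).real univ) := by
  have := hκ.isFiniteMeasure_bigJumps
  have hbig : charFun (bigJumps κ) u - (bigJumps κ).real univ =
      ∫ v, (Complex.exp (Complex.I * u * v) - 1) ∂bigJumps κ := by
    rw [integral_sub (hκ.integrable_exp_bigJumps u) (integrable_const _), charFun_apply_real]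
    simp [mul_comm, mul_left_comm]
  rw [hbig, levyExponent, compensatedExponent, add_assoc, hκ.integral_smallJumps,
    hκ.integral_bigJumps, ← integral_add (hκ.integrable_smallBump_mul_smul_compensatedExp u)
      (hκ.integrable_one_sub_smallBump_mul_smul_exp_sub_one u)]
  simp only [smul_exp_sub_eq_add]

lemma levyExponent_sub_integral {τ : ℝ → ℝ} (hτ : Measurable τ) {M : ℝ}
    (hM : ∀ v, |(τ v - smallBump v) * v| ≤ M * jumpWeight v) (c u : ℝ) :
    levyExponent (c - ∫ v, (τ v - smallBump v) * v * κ v) κ u = Complex.I * c * u +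
      ∫ v, κ v • (Complex.exp (Complex.I * u * v) - 1 - τ v * (Complex.I * u * v)) := by
  have hmeas : Measurable fun v => (τ v - smallBump v) * v :=
    (hτ.sub smallBump.continuous.measurable).mul measurable_id
  have hdrift : Integrable fun v : ℝ =>
      Complex.I * u * (((τ v - smallBump v) * v * κ v : ℝ) : ℂ) :=
    ((hκ.integrable_mul_of_abs_le hmeas hM).ofReal (𝕜 := ℂ)).const_mul _
  have hsplit (v : ℝ) :
      κ v • (Complex.exp (Complex.I * u * v) - 1 - τ v * (Complex.I * u * v)) =
        κ v • (Complex.exp (Complex.I * u * v) - 1 - smallBump v * (Complex.I * u * v)) -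
          Complex.I * u * ((τ v - smallBump v) * v * κ v : ℝ) := by
    simp only [Complex.real_smul]
    push_cast
    ring
  simp only [hsplit]
  rw [integral_sub (hκ.integrable_smul_exp_sub u) hdrift, integral_const_mul,
    integral_complex_ofReal, levyExponent]
  push_cast
  ring

lemma levySize_nonneg (c : ℝ) : 0 ≤ levySize c κ :=
  add_nonneg (abs_nonneg c) hκ.integral_jumpWeight_mul_nonneg

lemma measureReal_univ_bigJumps_le_levySize (c : ℝ) :
    (bigJumps κ).real univ ≤ 256 * levySize c κ := by
  rw [levySize]
  linarith [hκ.measureReal_univ_bigJumps_le, abs_nonneg c]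

lemma abs_add_integral_sq_smallJumps_le (c : ℝ) :
    |c| + ∫ v, v ^ 2 ∂smallJumps κ ≤ levySize c κ :=
  add_le_add_right hκ.integral_sq_smallJumps_le _

lemma sq_abs_add_integral_sq_smallJumps_le (c : ℝ) :
    (|c| + ∫ v, v ^ 2 ∂smallJumps κ) ^ 2 ≤ levySize c κ ^ 2 :=
  pow_le_pow_left₀ (add_nonneg (abs_nonneg c) (integral_nonneg fun v => sq_nonneg v))
    (hκ.abs_add_integral_sq_smallJumps_le c) 2

lemma norm_compensatedExponent_smallJumps_le (c u : ℝ) :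
    ‖compensatedExponent c (smallJumps κ) u‖ ≤ levySize c κ * (1 + u ^ 2) :=
  (norm_compensatedExponent_le hκ.integrable_sq_smallJumps c u).trans <|
    mul_le_mul_of_nonneg_right (hκ.abs_add_integral_sq_smallJumps_le c) (by positivity)

lemma norm_levyExponent_le (c u : ℝ) :
    ‖levyExponent c κ u‖ ≤ 513 * levySize c κ * (1 + u ^ 2) := by
  have := hκ.isFiniteMeasure_bigJumps
  have hbig : ‖charFun (bigJumps κ) u - (bigJumps κ).real univ‖ ≤ 512 * levySize c κ := by
    refine (norm_sub_le _ _).trans ?_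
    rw [Complex.norm_real, Real.norm_of_nonneg measureReal_nonneg]
    linarith [norm_charFun_le (μ := bigJumps κ) u, hκ.measureReal_univ_bigJumps_le_levySize c]
  rw [hκ.levyExponent_eq]
  refine (norm_add_le_of_le (hκ.norm_compensatedExponent_smallJumps_le c u) hbig).trans ?_
  nlinarith [mul_nonneg (hκ.levySize_nonneg c) (sq_nonneg u)]

variable {m : Measure ℝ} [IsProbabilityMeasure m] {c : ℝ}
  (hm : ∀ u, charFun m u = Complex.exp (levyExponent c κ u))

include hm

lemma norm_charFun_sub_one_le (u : ℝ) :
    ‖charFun m u - 1‖ ≤ 513 * levySize c κ * (1 + u ^ 2) := by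
  rw [hm]
  exact (norm_exp_sub_one_le_of_re_nonpos (re_nonpos_of_charFun_eq_exp (hm u))).trans
    (hκ.norm_levyExponent_le c u)

lemma exists_eq_conv_compoundPoisson : ∃ ν : Measure ℝ, IsProbabilityMeasure ν ∧
    (∀ u, charFun ν u = Complex.exp (compensatedExponent c (smallJumps κ) u)) ∧
    m = (compoundPoisson (bigJumps κ)).conv ν := by
  have := hκ.isFiniteMeasure_bigJumps
  obtain ⟨ν, _, hν⟩ := exists_charFun_eq_exp_compensatedExponent hκ.integrable_sq_smallJumps c
  refine ⟨ν, ‹_›, hν, Measure.ext_of_charFun (funext fun u => ?_)⟩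
  rw [charFun_conv, charFun_compoundPoisson, hν, ← Complex.exp_add, hm, hκ.levyExponent_eq,
    add_comm]

end IsLevyDensity

/-! ### Short-time estimate for truncated functionals -/

section SmallJumps

/-- The smooth cutoff bounding from below the deficit of `jumpWeight` from `1`. -/
def weightBump : ContDiffBump (0 : ℝ) := ⟨1, 2, by norm_num, by norm_num⟩

lemma one_sub_sq_mul_weightBump_le (v : ℝ) : (1 - v ^ 2) * weightBump v ≤ 1 - jumpWeight v := by
  obtain hv | hv := le_total |v| 1
  · rw [jumpWeight_of_abs_le_one hv,
      weightBump.one_of_mem_closedBall (by simpa [weightBump] using hv), mul_one]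
  · rw [jumpWeight_of_one_le_abs hv, sub_self]
    exact mul_nonpos_of_nonpos_of_nonneg (sub_nonpos.2 ((one_le_sq_iff_one_le_abs v).2 hv))
      weightBump.nonneg

lemma exists_integral_jumpWeight_le : ∃ C, 0 ≤ C ∧ ∀ (m : Measure ℝ) [IsProbabilityMeasure m]
    (D : ℝ), (∀ u, ‖charFun m u - 1‖ ≤ D * (1 + u ^ 2)) → ∫ v, jumpWeight v ∂m ≤ C * D := by
  obtain ⟨W, hW, hest⟩ := exists_abs_integral_add_sub_le
    (g := fun v => (1 - v ^ 2) * weightBump v)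
    (ContDiff.mul (by fun_prop) weightBump.contDiff) weightBump.hasCompactSupport.mul_left
  refine ⟨W, hW, fun m _ D hD => ?_⟩
  have h := neg_le_of_abs_le (hest m D hD 0)
  have hone : weightBump 0 = 1 := weightBump.eventuallyEq_one.eq_of_nhds
  simp only [add_zero, hone] at h
  have hcont : Continuous fun v : ℝ => (1 - v ^ 2) * weightBump v :=
    Continuous.mul (by fun_prop) weightBump.continuous
  have hint : Integrable (fun v => 1 - jumpWeight v) m :=
    (integrable_const _).sub (integrable_jumpWeight m)
  have hmono : ∫ v, (1 - v ^ 2) * weightBump v ∂m ≤ ∫ v, (1 - jumpWeight v) ∂m :=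
    integral_mono (hcont.integrable_of_hasCompactSupport weightBump.hasCompactSupport.mul_left) hint
      one_sub_sq_mul_weightBump_le
  rw [integral_sub (integrable_const _) (integrable_jumpWeight m)] at hmono
  simp only [integral_const, probReal_univ, one_smul] at hmono
  linarith

lemma exists_measureReal_lt_abs_le : ∃ C, 0 ≤ C ∧ ∀ (κ : ℝ → ℝ) (ν : Measure ℝ)
    [IsProbabilityMeasure ν] (c : ℝ), IsLevyDensity κ →
    (∀ u, charFun ν u = Complex.exp (compensatedExponent c (smallJumps κ) u)) →
    ν.real {v | 1 / 4 < |v|} ≤ C * levySize c κ ^ 2 := by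
  let θ : ContDiffBump (0 : ℝ) := ⟨1 / 8, 1 / 4, by norm_num, by norm_num⟩
  obtain ⟨W, hW, hest⟩ := exists_abs_integral_sub_generator_le θ.contDiff θ.hasCompactSupport
  refine ⟨W, hW, fun κ ν _ c hκ hν => ?_⟩
  have hone : θ 0 = 1 := θ.eventuallyEq_one.eq_of_nhds
  have hderiv : deriv θ 0 = 0 := by rw [θ.eventuallyEq_one.deriv_eq]; simp
  have hgen : ∫ v, (θ v - θ 0 - deriv θ 0 * v) ∂smallJumps κ = 0 :=
    integral_eq_zero_of_ae (hκ.ae_abs_le_smallJumps.mono fun v hv => by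
      simp [hone, hderiv, θ.one_of_mem_closedBall (x := v) (by simpa [θ] using hv)])
  have h := neg_le_of_abs_le (hest (smallJumps κ) ν c hκ.integrable_sq_smallJumps hν)
  rw [hgen, hderiv, hone] at h
  have hint : Integrable θ ν := θ.continuous.integrable_of_hasCompactSupport θ.hasCompactSupport
  have htail : ν.real {v | 1 / 4 < |v|} ≤ ∫ v, (1 - θ v) ∂ν := by
    have hmeas : MeasurableSet {v : ℝ | 1 / 4 < |v|} :=
      measurableSet_lt measurable_const measurable_norm
    rw [← integral_indicator_one hmeas]
    refine integral_mono_of_nonneg (ae_of_all _ (indicator_nonneg fun _ _ => zero_le_one))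
      ((integrable_const _).sub hint) (ae_of_all _ (indicator_le' (fun v hv => ?_) fun v _ => ?_))
    · have hv' : 1 / 4 ≤ |v| := le_of_lt hv
      have hzero : θ v = 0 := θ.zero_of_le_dist (by simpa [θ] using hv')
      simp [hzero]
    · exact sub_nonneg.2 θ.le_one
  rw [integral_sub (integrable_const _) hint] at htail
  simp only [integral_const, probReal_univ, one_smul] at htail
  calc ν.real {v | 1 / 4 < |v|} ≤ (|c| + ∫ v, v ^ 2 ∂smallJumps κ) ^ 2 * W := by linarith
    _ ≤ levySize c κ ^ 2 * W :=
        mul_le_mul_of_nonneg_right (hκ.sq_abs_add_integral_sq_smallJumps_le c) hW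
    _ = W * levySize c κ ^ 2 := mul_comm _ _

lemma exists_abs_integral_sub_integral_smallJumps_le {g : ℝ → ℝ} (hg : ContDiff ℝ (⊤ : ℕ∞) g)
    (hgs : HasCompactSupport g) (hg0 : g 0 = 0) (hg0' : deriv g 0 = 0) {M : ℝ} (hM : 0 ≤ M) :
    ∃ C, 0 ≤ C ∧ ∀ (κ : ℝ → ℝ) (ν : Measure ℝ) [IsProbabilityMeasure ν] (c : ℝ) (f : ℝ → ℝ),
      IsLevyDensity κ →
      (∀ u, charFun ν u = Complex.exp (compensatedExponent c (smallJumps κ) u)) →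
      Measurable f → (∀ v, |f v| ≤ M) → (∀ v, |v| ≤ 1 / 4 → f v = g v) →
      |∫ v, f v ∂ν - ∫ v, f v ∂smallJumps κ| ≤ C * levySize c κ ^ 2 := by
  obtain ⟨W, hW, hest⟩ := exists_abs_integral_sub_generator_le hg hgs
  obtain ⟨Ct, hCt, htail⟩ := exists_measureReal_lt_abs_le
  obtain ⟨Mg, hMg⟩ := hgs.exists_bound_of_continuous hg.continuous
  have hMg0 : 0 ≤ Mg := (norm_nonneg _).trans (hMg 0)
  refine ⟨W + (M + Mg) * Ct, by positivity, fun κ ν _ c f hκ hν hf hfM hfg => ?_⟩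
  have hlevy : ∫ v, f v ∂smallJumps κ = ∫ v, (g v - g 0 - deriv g 0 * v) ∂smallJumps κ :=
    integral_congr_ae (hκ.ae_abs_le_smallJumps.mono fun v hv => by
      simp [hg0, hg0', hfg v (hv.trans (by norm_num))])
  have hsmooth : |∫ v, g v ∂ν - ∫ v, f v ∂smallJumps κ| ≤ W * levySize c κ ^ 2 := by
    have h := hest (smallJumps κ) ν c hκ.integrable_sq_smallJumps hν
    rw [← hlevy, hg0', hg0, mul_zero, zero_add, sub_zero] at h
    rw [mul_comm W]
    exact h.trans (mul_le_mul_of_nonneg_right (hκ.sq_abs_add_integral_sq_smallJumps_le c) hW)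
  have hcut : |∫ v, f v ∂ν - ∫ v, g v ∂ν| ≤ (M + Mg) * (Ct * levySize c κ ^ 2) := by
    have hfint : Integrable f ν := .of_bound hf.aestronglyMeasurable M (ae_of_all _ hfM)
    have : MeasurableSet {v : ℝ | 1 / 4 < |v|} :=
      measurableSet_lt measurable_const measurable_norm
    rw [← integral_sub hfint (hg.continuous.integrable_of_hasCompactSupport hgs),
      ← setIntegral_eq_integral_of_forall_compl_eq_zero (s := {v | 1 / 4 < |v|}) fun v hv =>
        sub_eq_zero.2 (hfg v (not_lt.1 hv)), ← Real.norm_eq_abs]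
    refine (norm_setIntegral_le_of_norm_le_const (measure_lt_top _ _) fun v _ =>
      norm_sub_le_of_le (hfM v) (hMg v)).trans ?_
    exact mul_le_mul_of_nonneg_left (htail κ ν c hκ hν) (by positivity)
  calc |∫ v, f v ∂ν - ∫ v, f v ∂smallJumps κ|
      ≤ |∫ v, f v ∂ν - ∫ v, g v ∂ν| + |∫ v, g v ∂ν - ∫ v, f v ∂smallJumps κ| := abs_sub_le _ _ _
    _ ≤ (M + Mg) * (Ct * levySize c κ ^ 2) + W * levySize c κ ^ 2 := add_le_add hcut hsmooth
    _ = (W + (M + Mg) * Ct) * levySize c κ ^ 2 := by ring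

end SmallJumps

section ShortTime

lemma measurable_integral_add {ν : Measure ℝ} [SFinite ν] {f : ℝ → ℝ} (hf : Measurable f) :
    Measurable fun y => ∫ x, f (y + x) ∂ν :=
  (StronglyMeasurable.integral_prod_right (f := fun y x : ℝ => f (y + x))
    (hf.comp measurable_add).stronglyMeasurable).measurable

lemma abs_integral_add_le {ν : Measure ℝ} [IsProbabilityMeasure ν] {f : ℝ → ℝ} {M : ℝ}
    (hM : ∀ v, |f v| ≤ M) (y : ℝ) : |∫ x, f (y + x) ∂ν| ≤ M := by
  simpa using norm_integral_le_of_norm_le_const (μ := ν) (f := fun x => f (y + x))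
    (ae_of_all _ fun x => hM (y + x))

lemma abs_le_of_abs_le_mul_jumpWeight {f : ℝ → ℝ} {M : ℝ} (hM : 0 ≤ M)
    (hf : ∀ v, |f v| ≤ M * jumpWeight v) (v : ℝ) : |f v| ≤ M :=
  (hf v).trans (mul_le_of_le_one_right hM (jumpWeight_le_one v))

lemma abs_integral_le_mul_integral_jumpWeight {ν : Measure ℝ} [IsProbabilityMeasure ν] {f : ℝ → ℝ}
    {M : ℝ} (hf : ∀ v, |f v| ≤ M * jumpWeight v) :
    |∫ v, f v ∂ν| ≤ M * ∫ v, jumpWeight v ∂ν := by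
  rw [← integral_const_mul, ← Real.norm_eq_abs]
  exact norm_integral_le_of_norm_le ((integrable_jumpWeight ν).const_mul M) (ae_of_all _ hf)

lemma exists_abs_integral_conv_sub_le {g : ℝ → ℝ} (hg : ContDiff ℝ (⊤ : ℕ∞) g)
    (hgs : HasCompactSupport g) (hg0 : g 0 = 0) (hg0' : deriv g 0 = 0) {M : ℝ} (hM : 0 ≤ M) :
    ∃ C, 0 ≤ C ∧ ∀ (κ : ℝ → ℝ) (ν : Measure ℝ) [IsProbabilityMeasure ν] (c : ℝ) (f : ℝ → ℝ),
      IsLevyDensity κ →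
      (∀ u, charFun ν u = Complex.exp (compensatedExponent c (smallJumps κ) u)) →
      Measurable f → (∀ v, |f v| ≤ M * jumpWeight v) → (∀ v, |v| ≤ 1 / 4 → f v = g v) →
      |∫ v, f v ∂((compoundPoisson (bigJumps κ)).conv ν) -
          (∫ v, f v ∂smallJumps κ + ∫ y, ∫ x, f (y + x) ∂ν ∂bigJumps κ)| ≤
        C * levySize c κ ^ 2 := by
  obtain ⟨Cw, hCw, hweight⟩ := exists_integral_jumpWeight_le
  obtain ⟨Cs, hCs, hsmall⟩ := exists_abs_integral_sub_integral_smallJumps_le hg hgs hg0 hg0' hM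
  refine ⟨3 * M * 256 ^ 2 + 256 * (M * Cw) + Cs, by positivity,
    fun κ ν _ c f hκ hν hf hfw hfg => ?_⟩
  have := hκ.isFiniteMeasure_bigJumps
  have hfM := abs_le_of_abs_le_mul_jumpWeight hM hfw
  have hT := hκ.levySize_nonneg c
  set T := levySize c κ
  set l := (bigJumps κ).real univ
  have hl : 0 ≤ l := measureReal_nonneg
  have hlT : l ≤ 256 * T := hκ.measureReal_univ_bigJumps_le_levySize c
  have hfint : Integrable f ((compoundPoisson (bigJumps κ)).conv ν) :=
    .of_bound hf.aestronglyMeasurable M (ae_of_all _ hfM)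
  rw [integral_conv hfint]
  have hcp := abs_integral_compoundPoisson_sub_le_sq (μ := bigJumps κ)
    (measurable_integral_add (ν := ν) hf) (abs_integral_add_le hfM)
  simp only [zero_add] at hcp
  have hF0 : |∫ v, f v ∂ν| ≤ M * (Cw * T) := by
    refine (abs_integral_le_mul_integral_jumpWeight hfw).trans
      (mul_le_mul_of_nonneg_left (hweight ν T fun u => ?_) hM)
    rw [hν]
    exact (norm_exp_sub_one_le_of_re_nonpos (re_nonpos_of_charFun_eq_exp (hν u))).trans
      (hκ.norm_compensatedExponent_smallJumps_le c u)
  have hlF0 : |l * ∫ v, f v ∂ν| ≤ 256 * T * (M * (Cw * T)) := by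
    rw [abs_mul, abs_of_nonneg hl]
    gcongr
  have hl2 : 3 * M * l ^ 2 ≤ 3 * M * (256 * T) ^ 2 := by gcongr
  have hs := hsmall κ ν c f hκ hν hf hfM hfg
  rw [abs_le] at hcp hlF0 hs ⊢
  constructor <;> linarith

lemma integrable_of_abs_le_of_eq_zero {f : ℝ → ℝ} (hf : Measurable f) {M : ℝ}
    (hM : ∀ v, |f v| ≤ M) (hf0 : ∀ v, 2 < |v| → f v = 0) : Integrable f := by
  refine IntegrableOn.integrable_of_forall_notMem_eq_zero (s := Icc (-2) 2)
    (Measure.integrableOn_of_bounded (M := M) (by simp) hf.aestronglyMeasurable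
      (ae_of_all _ hM)) fun v hv => hf0 v ?_
  rwa [mem_Icc, ← abs_le, not_le] at hv

variable {β : ℝ → ℝ} (hβ : ContDiff ℝ (⊤ : ℕ∞) β) (hβs : HasCompactSupport β)

include hβ hβs

lemma integral_mul_integral_add_eq (ν : Measure ℝ) [IsFiniteMeasure ν] {f : ℝ → ℝ}
    (hf : Measurable f) {M : ℝ} (hM : ∀ v, |f v| ≤ M) (hf0 : ∀ v, 2 < |v| → f v = 0) :
    ∫ y, β y * ∫ x, f (y + x) ∂ν = ∫ z, f z * ∫ x, β (z - x) ∂ν := by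
  obtain ⟨Mβ, hMβ⟩ := hβs.exists_bound_of_continuous hβ.continuous
  have hβm := hβ.continuous.measurable
  have hleft : Integrable (Function.uncurry fun y x => β y * f (y + x)) (volume.prod ν) := by
    refine (((hβ.continuous.integrable_of_hasCompactSupport hβs).norm.mul_const M).mul_prod
      (integrable_const (1 : ℝ))).mono' (Measurable.aestronglyMeasurable (by fun_prop))
      (ae_of_all _ fun p => ?_)
    rw [Function.uncurry, norm_mul, mul_one]
    exact mul_le_mul_of_nonneg_left (hM _) (norm_nonneg _)
  have hright : Integrable (Function.uncurry fun x z => f z * β (z - x)) (ν.prod volume) := by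
    refine ((integrable_const Mβ).mul_prod (integrable_of_abs_le_of_eq_zero hf hM hf0).norm).mono'
      (Measurable.aestronglyMeasurable (by fun_prop)) (ae_of_all _ fun p => ?_)
    rw [Function.uncurry, norm_mul, mul_comm]
    exact mul_le_mul_of_nonneg_right (hMβ _) (norm_nonneg _)
  simp_rw [← integral_const_mul]
  rw [integral_integral_swap hleft, ← integral_integral_swap hright]
  congr with x
  rw [← integral_add_right_eq_self (fun z => f z * β (z - x)) x]
  simp only [add_sub_cancel_right, mul_comm]

lemma exists_abs_integral_mul_integral_add_sub_le {M : ℝ} (hM : 0 ≤ M) :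
    ∃ C, 0 ≤ C ∧ ∀ (ν : Measure ℝ) [IsProbabilityMeasure ν] (D : ℝ) (f : ℝ → ℝ),
      (∀ u, ‖charFun ν u - 1‖ ≤ D * (1 + u ^ 2)) →
      Measurable f → (∀ v, |f v| ≤ M) → (∀ v, 2 < |v| → f v = 0) →
      |(∫ y, β y * ∫ x, f (y + x) ∂ν) - ∫ y, f y * β y| ≤ C * D := by
  obtain ⟨W, hW, hest⟩ := exists_abs_integral_add_sub_le (g := fun v => β (-v))
    (hβ.comp contDiff_neg) (hβs.comp_homeomorph (Homeomorph.neg ℝ))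
  obtain ⟨Mβ, hMβ⟩ := hβs.exists_bound_of_continuous hβ.continuous
  refine ⟨4 * M * W, by positivity, fun ν _ D f hD hf hfM hf0 => ?_⟩
  have hcont := hβ.continuous
  have hsmooth (z : ℝ) : |∫ x, β (z - x) ∂ν - β z| ≤ D * W := by
    simpa [neg_add_eq_sub, ← sub_eq_add_neg] using hest ν D hD (-z)
  have hfint := integrable_of_abs_le_of_eq_zero hf hfM hf0
  have hconv : Integrable fun z => f z * ∫ x, β (z - x) ∂ν := by
    have hmeas : StronglyMeasurable fun z => ∫ x, β (z - x) ∂ν :=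
      StronglyMeasurable.integral_prod_right (f := fun z x : ℝ => β (z - x))
        (Continuous.stronglyMeasurable (by unfold Function.uncurry; fun_prop))
    refine hfint.mul_bdd (c := Mβ) hmeas.aestronglyMeasurable (ae_of_all _ fun z => ?_)
    simpa using norm_integral_le_of_norm_le_const (μ := ν) (f := fun x => β (z - x))
      (ae_of_all _ fun x => hMβ (z - x))
  rw [integral_mul_integral_add_eq hβ hβs ν hf hfM hf0, ← integral_sub hconv
    (hfint.mul_bdd (c := Mβ) hcont.aestronglyMeasurable (ae_of_all _ hMβ)),
    ← setIntegral_eq_integral_of_forall_compl_eq_zero (s := Icc (-2) 2) fun z hz => ?_,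
    ← Real.norm_eq_abs]
  · refine (norm_setIntegral_le_of_norm_le_const (C := M * (D * W)) (by simp) fun z _ => ?_).trans
      (le_of_eq ?_)
    · rw [← mul_sub, norm_mul]
      exact mul_le_mul (hfM z) (hsmooth z) (abs_nonneg _) hM
    · rw [Real.volume_real_Icc_of_le (by norm_num)]
      ring
  · rw [mem_Icc, ← abs_le, not_le] at hz
    simp [hf0 z hz]

end ShortTime

/-- The smooth cutoff that separates moderate jumps from those that cannot be compensated by a small
jump to reach `[-2, 2]`. -/
def farBump : ContDiffBump (0 : ℝ) := ⟨4, 8, by norm_num, by norm_num⟩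

lemma farBump_eq_one {v : ℝ} (hv : |v| ≤ 4) : farBump v = 1 :=
  farBump.one_of_mem_closedBall (by simpa [farBump] using hv)

lemma abs_integral_add_le_of_four_le {ν : Measure ℝ} [IsProbabilityMeasure ν] {f : ℝ → ℝ} {M : ℝ}
    (hM : 0 ≤ M) (hfM : ∀ v, |f v| ≤ M) (hf0 : ∀ v, 2 < |v| → f v = 0) {y : ℝ} (hy : 4 ≤ |y|) :
    |∫ x, f (y + x) ∂ν| ≤ M * ∫ x, jumpWeight x ∂ν := by
  refine abs_integral_le_mul_integral_jumpWeight fun x => ?_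
  obtain hyx | hyx := lt_or_ge 2 |y + x|
  · rw [hf0 _ hyx, abs_zero]
    exact mul_nonneg hM (jumpWeight_nonneg x)
  · have hx : |y| ≤ |y + x| + |x| := by simpa using abs_sub (y + x) x
    rw [jumpWeight_of_one_le_abs (by linarith), mul_one]
    exact hfM _

namespace IsLevyDensity

variable {κ κ₀ : ℝ → ℝ}

lemma contDiff_farBump_mul (hsmooth : ContDiffOn ℝ (⊤ : ℕ∞) κ₀ {0}ᶜ) :
    ContDiff ℝ (⊤ : ℕ∞) fun v => farBump v * ((1 - smallBump v) * κ₀ v) := by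
  refine contDiff_iff_contDiffAt.2 fun v => ?_
  obtain rfl | hv := eq_or_ne v 0
  · refine (contDiffAt_const (c := (0 : ℝ))).congr_of_eventuallyEq ?_
    filter_upwards [smallBump.eventuallyEq_one] with v hv
    simp [hv]
  · exact farBump.contDiffAt.mul ((contDiffAt_const.sub smallBump.contDiffAt).mul
      (hsmooth.contDiffAt (isOpen_compl_singleton.mem_nhds hv)))

lemma integral_smallJumps_add_integral_bigJumps (hκ : IsLevyDensity κ) {f : ℝ → ℝ}
    (hf : Measurable f) {M : ℝ} (hfw : ∀ v, |f v| ≤ M * jumpWeight v) :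
    ∫ v, f v ∂smallJumps κ + ∫ v, f v ∂bigJumps κ = ∫ v, f v * κ v := by
  have hmeas : Measurable fun v => smallBump v * f v := smallBump.continuous.measurable.mul hf
  have hsmall : Integrable fun v => smallBump v * κ v * f v := by
    refine (hκ.integrable_mul_of_abs_le hmeas (M := M) fun v => ?_).congr
      (ae_of_all _ fun v => by ring)
    rw [abs_mul, abs_of_nonneg smallBump.nonneg]
    exact (mul_le_of_le_one_left (abs_nonneg _) smallBump.le_one).trans (hfw v)
  have hbig : Integrable fun v => (1 - smallBump v) * κ v * f v :=
    ((hκ.integrable_mul_of_abs_le hf hfw).sub hsmall).congr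
      (ae_of_all _ fun v => by simp only [Pi.sub_apply]; ring)
  rw [hκ.integral_smallJumps, hκ.integral_bigJumps]
  simp only [smul_eq_mul]
  rw [← integral_add hsmall hbig]
  congr with v
  ring

lemma integral_bigJumps_eq_add (hκ : IsLevyDensity κ) {F : ℝ → ℝ} (hF : Measurable F) {M : ℝ}
    (hFM : ∀ v, |F v| ≤ M) :
    ∫ v, F v ∂bigJumps κ = (∫ v, farBump v * ((1 - smallBump v) * κ v) * F v) +
      ∫ v, (1 - farBump v) * F v ∂bigJumps κ := by
  have := hκ.isFiniteMeasure_bigJumps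
  have hmeas : Measurable fun v => farBump v := farBump.continuous.measurable
  have hint : Integrable F (bigJumps κ) :=
    .of_bound hF.aestronglyMeasurable M (ae_of_all _ hFM)
  have hcut : Integrable (fun v => farBump v * F v) (bigJumps κ) :=
    hint.bdd_mul (c := 1) hmeas.aestronglyMeasurable (ae_of_all _ fun v => by
      rw [Real.norm_of_nonneg farBump.nonneg]
      exact farBump.le_one)
  have hsplit (v : ℝ) : (1 - farBump v) * F v = F v - farBump v * F v := by ring
  have hnear : ∫ v, farBump v * F v ∂bigJumps κ =
      ∫ v, farBump v * ((1 - smallBump v) * κ v) * F v := by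
    rw [hκ.integral_bigJumps]
    congr with v
    rw [smul_eq_mul]
    ring
  simp only [hsplit]
  rw [integral_sub hint hcut, hnear, add_sub_cancel]

lemma exists_abs_integral_bigJumps_add_sub_le (hκ : IsLevyDensity κ)
    (hsmooth : ContDiffOn ℝ (⊤ : ℕ∞) κ {0}ᶜ) {M : ℝ} (hM : 0 ≤ M) :
    ∃ C, 0 ≤ C ∧ ∀ (ν : Measure ℝ) [IsProbabilityMeasure ν] (D : ℝ) (f : ℝ → ℝ),
      (∀ u, ‖charFun ν u - 1‖ ≤ D * (1 + u ^ 2)) →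
      Measurable f → (∀ v, |f v| ≤ M) → (∀ v, 2 < |v| → f v = 0) →
      |(∫ y, ∫ x, f (y + x) ∂ν ∂bigJumps κ) - ∫ y, f y ∂bigJumps κ| ≤ C * D := by
  have := hκ.isFiniteMeasure_bigJumps
  obtain ⟨Cβ, hCβ, hβ⟩ := exists_abs_integral_mul_integral_add_sub_le
    (contDiff_farBump_mul hsmooth) farBump.hasCompactSupport.mul_right hM
  obtain ⟨Cw, hCw, hweight⟩ := exists_integral_jumpWeight_le
  set l := (bigJumps κ).real univ
  refine ⟨Cβ + M * Cw * l, by positivity, fun ν _ D f hD hf hfM hf0 => ?_⟩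
  have hD0 : 0 ≤ D := by simpa using (norm_nonneg _).trans (hD 0)
  have hnear := hβ ν D f hD hf hfM hf0
  have hfar : |∫ y, (1 - farBump y) * ∫ x, f (y + x) ∂ν ∂bigJumps κ| ≤ M * (Cw * D) * l := by
    rw [← Real.norm_eq_abs]
    refine norm_integral_le_of_norm_le_const (ae_of_all _ fun y => ?_)
    rw [norm_mul, Real.norm_of_nonneg (sub_nonneg.2 farBump.le_one)]
    obtain hy | hy := le_total |y| 4
    · rw [farBump_eq_one hy, sub_self, zero_mul]
      positivity
    · refine (mul_le_of_le_one_left (norm_nonneg _) (sub_le_self 1 farBump.nonneg)).trans ?_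
      exact (abs_integral_add_le_of_four_le hM hfM hf0 hy).trans
        (mul_le_mul_of_nonneg_left (hweight ν D hD) hM)
  have hf_far : ∫ y, (1 - farBump y) * f y ∂bigJumps κ = 0 := by
    refine integral_eq_zero_of_ae (ae_of_all _ fun y => ?_)
    obtain hy | hy := le_total |y| 4
    · simp [farBump_eq_one hy]
    · simp [hf0 y (by linarith)]
  rw [hκ.integral_bigJumps_eq_add (measurable_integral_add hf) (abs_integral_add_le hfM),
    hκ.integral_bigJumps_eq_add hf hfM, hf_far, add_zero]
  simp only [mul_comm (f _)] at hnear
  rw [abs_le] at hnear hfar ⊢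
  constructor <;> linarith

lemma abs_integral_mul_sub_mul_integral_le (hκ : IsLevyDensity κ) (hκ₀ : IsLevyDensity κ₀)
    {f : ℝ → ℝ} (hf : Measurable f) {M : ℝ} (hfw : ∀ v, |f v| ≤ M * jumpWeight v) (t : ℝ) :
    |(∫ v, κ v * f v) - t * ∫ v, κ₀ v * f v| ≤ M * ∫ v, jumpWeight v * |κ v - t * κ₀ v| := by
  have hint := hκ.integrable_mul_of_abs_le hf hfw
  have hint₀ := (hκ₀.integrable_mul_of_abs_le hf hfw).const_mul t
  have hdiff : Integrable fun v => jumpWeight v * |κ v - t * κ₀ v| := by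
    refine (hκ.integrable.sub (hκ₀.integrable.const_mul t)).norm.congr (ae_of_all _ fun v => ?_)
    simp only [Pi.sub_apply]
    rw [mul_left_comm, ← mul_sub, norm_mul, Real.norm_of_nonneg (jumpWeight_nonneg v),
      Real.norm_eq_abs]
  simp only [mul_comm _ (f _)]
  rw [← integral_const_mul, ← integral_const_mul, ← integral_sub hint hint₀, ← Real.norm_eq_abs]
  refine norm_integral_le_of_norm_le (hdiff.const_mul M) (ae_of_all _ fun v => ?_)
  rw [mul_left_comm, ← mul_sub, norm_mul, ← mul_assoc]
  exact mul_le_mul_of_nonneg_right (hfw v) (abs_nonneg _)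

lemma abs_integral_smallJumps_sub_le (hκ : IsLevyDensity κ) (hκ₀ : IsLevyDensity κ₀)
    {f : ℝ → ℝ} (hf : Measurable f) {M : ℝ} (hfw : ∀ v, |f v| ≤ M * jumpWeight v) (t : ℝ) :
    |(∫ v, f v ∂smallJumps κ) - t * ∫ v, f v ∂smallJumps κ₀| ≤
      M * ∫ v, jumpWeight v * |κ v - t * κ₀ v| := by
  have hmeas : Measurable fun v => smallBump v * f v := smallBump.continuous.measurable.mul hf
  have h := hκ.abs_integral_mul_sub_mul_integral_le hκ₀ hmeas (M := M) (fun v => by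
    rw [abs_mul, abs_of_nonneg smallBump.nonneg]
    exact (mul_le_of_le_one_left (abs_nonneg _) smallBump.le_one).trans (hfw v)) t
  rw [hκ.integral_smallJumps, hκ₀.integral_smallJumps]
  simpa only [smul_eq_mul, mul_assoc, mul_left_comm] using h

lemma abs_integral_bigJumps_sub_le (hκ : IsLevyDensity κ) (hκ₀ : IsLevyDensity κ₀)
    {F : ℝ → ℝ} (hF : Measurable F) {M : ℝ} (hFM : ∀ v, |F v| ≤ M) (t : ℝ) :
    |(∫ v, F v ∂bigJumps κ) - t * ∫ v, F v ∂bigJumps κ₀| ≤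
      256 * M * ∫ v, jumpWeight v * |κ v - t * κ₀ v| := by
  have hmeas : Measurable fun v => (1 - smallBump v) * F v :=
    (smallBump.continuous.measurable.const_sub 1).mul hF
  have h := hκ.abs_integral_mul_sub_mul_integral_le hκ₀ hmeas (M := 256 * M) (fun v => by
    rw [abs_mul, abs_of_nonneg (sub_nonneg.2 smallBump.le_one), mul_right_comm]
    exact mul_le_mul (one_sub_smallBump_le v) (hFM v) (abs_nonneg _)
      (mul_nonneg (by norm_num) (jumpWeight_nonneg v))) t
  rw [hκ.integral_bigJumps, hκ₀.integral_bigJumps]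
  simpa only [smul_eq_mul, mul_assoc, mul_left_comm] using h

end IsLevyDensity

theorem exists_abs_integral_sub_mul_integral_le {κ₀ g : ℝ → ℝ} (hκ₀ : IsLevyDensity κ₀)
    (hsmooth : ContDiffOn ℝ (⊤ : ℕ∞) κ₀ {0}ᶜ) (hg : ContDiff ℝ (⊤ : ℕ∞) g)
    (hgs : HasCompactSupport g) (hg0 : g 0 = 0) (hg0' : deriv g 0 = 0) {M : ℝ} (hM : 0 ≤ M) :
    ∃ C, 0 ≤ C ∧ ∀ (κ : ℝ → ℝ) (m : Measure ℝ) [IsProbabilityMeasure m] (c t : ℝ) (f : ℝ → ℝ),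
      IsLevyDensity κ → (∀ u, charFun m u = Complex.exp (levyExponent c κ u)) → 0 ≤ t →
      Measurable f → (∀ v, |f v| ≤ M * jumpWeight v) → (∀ v, |v| ≤ 1 / 4 → f v = g v) →
      (∀ v, 2 < |v| → f v = 0) →
      |∫ v, f v ∂m - t * ∫ v, f v * κ₀ v| ≤ C * (levySize c κ ^ 2 + t * levySize c κ +
        ∫ v, jumpWeight v * |κ v - t * κ₀ v|) := by
  obtain ⟨Cc, hCc, hconv⟩ := exists_abs_integral_conv_sub_le hg hgs hg0 hg0' hM
  obtain ⟨Cb, hCb, hbig⟩ := hκ₀.exists_abs_integral_bigJumps_add_sub_le hsmooth hM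
  refine ⟨Cc + Cb + 257 * M, by positivity, fun κ m _ c t f hκ hm ht hf hfw hfg hf0 => ?_⟩
  obtain ⟨ν, _, hν, rfl⟩ := hκ.exists_eq_conv_compoundPoisson hm
  have hfM := abs_le_of_abs_le_mul_jumpWeight hM hfw
  have hT := hκ.levySize_nonneg c
  set T := levySize c κ
  set δ := ∫ v, jumpWeight v * |κ v - t * κ₀ v|
  have hδ : 0 ≤ δ := integral_nonneg fun v => mul_nonneg (jumpWeight_nonneg v) (abs_nonneg _)
  have hsplit := hconv κ ν c f hκ hν hf hfw hfg
  have hsmall := hκ.abs_integral_smallJumps_sub_le hκ₀ hf hfw t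
  have hreplace := hκ.abs_integral_bigJumps_sub_le hκ₀ (measurable_integral_add (ν := ν) hf)
    (abs_integral_add_le hfM) t
  have hsmear : |t * ((∫ y, ∫ x, f (y + x) ∂ν ∂bigJumps κ₀) - ∫ y, f y ∂bigJumps κ₀)| ≤
      t * (Cb * T) := by
    rw [abs_mul, abs_of_nonneg ht]
    refine mul_le_mul_of_nonneg_left (hbig ν T f (fun u => ?_) hf hfM hf0) ht
    rw [hν]
    exact (norm_exp_sub_one_le_of_re_nonpos (re_nonpos_of_charFun_eq_exp (hν u))).trans
      (hκ.norm_compensatedExponent_smallJumps_le c u)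
  rw [← hκ₀.integral_smallJumps_add_integral_bigJumps hf hfw]
  have hslack : 0 ≤ Cc * (t * T + δ) + Cb * (T ^ 2 + δ) + 257 * M * (T ^ 2 + t * T) := by
    positivity
  rw [abs_le] at hsplit hsmall hreplace hsmear ⊢
  constructor <;> linarith

/-! ### Stable densities and rescaling -/

/-- The Lévy density of a stable law of index `Y`. -/
def stableDensity (Y Cp Cm : ℝ) : ℝ → ℝ := levyDensity Y Cp Cm 1

lemma jumpWeight_neg (v : ℝ) : jumpWeight (-v) = jumpWeight v := by
  simp only [jumpWeight, neg_sq]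

section StableDensity

variable {Y Cp Cm : ℝ}

lemma levyDensity_eq_mul_stableDensity (q : ℝ → ℝ) (x : ℝ) :
    levyDensity Y Cp Cm q x = q x * stableDensity Y Cp Cm x := by
  simp only [stableDensity, levyDensity, Pi.one_apply]
  ring

lemma stableDensity_of_pos {x : ℝ} (hx : 0 < x) : stableDensity Y Cp Cm x = Cp * x ^ (-1 - Y) := by
  simp [stableDensity, levyDensity, hx, abs_of_pos hx]

lemma stableDensity_of_neg {x : ℝ} (hx : x < 0) :
    stableDensity Y Cp Cm x = Cm * (-x) ^ (-1 - Y) := by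
  simp [stableDensity, levyDensity, hx, abs_of_neg hx, not_lt_of_gt hx]

@[simp]
lemma stableDensity_zero : stableDensity Y Cp Cm 0 = 0 := by
  simp [stableDensity, levyDensity]

lemma stableDensity_neg (v : ℝ) : stableDensity Y Cp Cm (-v) = stableDensity Y Cm Cp v := by
  obtain hv | rfl | hv := lt_trichotomy v 0
  · rw [stableDensity_of_pos (neg_pos.2 hv), stableDensity_of_neg hv]
  · simp only [neg_zero, stableDensity_zero]
  · rw [stableDensity_of_neg (neg_lt_zero.2 hv), stableDensity_of_pos hv, neg_neg]

lemma stableDensity_mul {e : ℝ} (he : 0 < e) (v : ℝ) :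
    stableDensity Y Cp Cm (e * v) = e ^ (-1 - Y) * stableDensity Y Cp Cm v := by
  obtain hv | rfl | hv := lt_trichotomy v 0
  · rw [stableDensity_of_neg hv, stableDensity_of_neg (mul_neg_of_pos_of_neg he hv),
      neg_mul_eq_mul_neg, Real.mul_rpow he.le (by linarith), mul_left_comm]
  · simp
  · rw [stableDensity_of_pos hv, stableDensity_of_pos (mul_pos he hv),
      Real.mul_rpow he.le hv.le, mul_left_comm]

lemma abs_mul_stableDensity (v : ℝ) :
    |v| * stableDensity Y Cp Cm v = stableDensity (Y - 1) Cp Cm v := by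
  obtain rfl | hv := eq_or_ne v 0
  · simp
  · simp only [stableDensity, levyDensity]
    rw [mul_left_comm, mul_comm |v|, ← Real.rpow_add_one (abs_ne_zero.2 hv)]
    ring_nf

lemma measurable_stableDensity : Measurable (stableDensity Y Cp Cm) := by
  unfold stableDensity levyDensity
  refine ((Measurable.ite measurableSet_Ioi measurable_const (Measurable.ite measurableSet_Iio
    measurable_const measurable_const)).mul measurable_const).mul (by fun_prop)

lemma contDiffOn_stableDensity : ContDiffOn ℝ (⊤ : ℕ∞) (stableDensity Y Cp Cm) {0}ᶜ := by
  intro v hv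
  refine ContDiffAt.contDiffWithinAt ?_
  obtain hv | hv := lt_or_gt_of_ne hv
  · have hpow : ContDiffAt ℝ (⊤ : ℕ∞) (fun x => Cm * (-x) ^ (-1 - Y)) v :=
      contDiffAt_const.mul (contDiffAt_id.neg.rpow_const_of_ne (by simpa using hv.ne))
    refine hpow.congr_of_eventuallyEq ?_
    filter_upwards [Iio_mem_nhds hv] with x hx
    exact stableDensity_of_neg hx
  · have hpow : ContDiffAt ℝ (⊤ : ℕ∞) (fun x => Cp * x ^ (-1 - Y)) v :=
      contDiffAt_const.mul (contDiffAt_id.rpow_const_of_ne hv.ne')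
    refine hpow.congr_of_eventuallyEq ?_
    filter_upwards [Ioi_mem_nhds hv] with x hx
    exact stableDensity_of_pos hx

lemma integrableOn_Ioi_jumpWeight_mul_rpow (hY0 : 0 < Y) (hY2 : Y < 2) :
    IntegrableOn (fun v => jumpWeight v * v ^ (-1 - Y)) (Ioi 0) := by
  have : Measurable fun v : ℝ => jumpWeight v * v ^ (-1 - Y) :=
    continuous_jumpWeight.measurable.mul (by fun_prop)
  have hnear : IntegrableOn (fun v : ℝ => v ^ (1 - Y)) (Ioc 0 1) :=
    (intervalIntegrable_iff_integrableOn_Ioc_of_le zero_le_one).1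
      (intervalIntegral.intervalIntegrable_rpow' (by linarith))
  have hfar : IntegrableOn (fun v : ℝ => v ^ (-1 - Y)) (Ioi 1) :=
    integrableOn_Ioi_rpow_of_lt (by linarith) one_pos
  rw [← Ioc_union_Ioi_eq_Ioi zero_le_one]
  refine (hnear.congr_fun (fun v hv => ?_) measurableSet_Ioc).union
    (hfar.congr_fun (fun v hv => ?_) measurableSet_Ioi)
  · rw [jumpWeight_of_abs_le_one (by rw [abs_of_pos hv.1]; exact hv.2), ← Real.rpow_natCast,
      ← Real.rpow_add hv.1]
    norm_num
    ring_nf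
  · rw [jumpWeight_of_one_le_abs (hv.le.trans (le_abs_self v)), one_mul]

lemma integrableOn_Ioi_jumpWeight_mul_stableDensity (hY0 : 0 < Y) (hY2 : Y < 2) :
    IntegrableOn (fun v => jumpWeight v * stableDensity Y Cp Cm v) (Ioi 0) := by
  refine IntegrableOn.congr_fun
    (Integrable.const_mul (integrableOn_Ioi_jumpWeight_mul_rpow hY0 hY2) Cp)
    (fun v hv => ?_) measurableSet_Ioi
  rw [stableDensity_of_pos hv, mul_left_comm]

variable (hCp : 0 ≤ Cp) (hCm : 0 ≤ Cm)

include hCp hCm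

lemma stableDensity_nonneg (v : ℝ) : 0 ≤ stableDensity Y Cp Cm v := by
  obtain hv | rfl | hv := lt_trichotomy v 0
  · rw [stableDensity_of_neg hv]
    exact mul_nonneg hCm (Real.rpow_nonneg (by linarith) _)
  · simp
  · rw [stableDensity_of_pos hv]
    positivity

lemma isLevyDensity_stableDensity (hY0 : 0 < Y) (hY2 : Y < 2) :
    IsLevyDensity (stableDensity Y Cp Cm) := by
  refine ⟨measurable_stableDensity, stableDensity_nonneg hCp hCm, ?_⟩
  have hpos : IntegrableOn (fun v => jumpWeight v * stableDensity Y Cp Cm v) (Ioi 0) :=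
    integrableOn_Ioi_jumpWeight_mul_stableDensity hY0 hY2
  have hneg := ((integrableOn_Ici_iff_integrableOn_Ioi).2
    (integrableOn_Ioi_jumpWeight_mul_stableDensity (Cp := Cm) (Cm := Cp) hY0 hY2)).comp_neg
  simp only [jumpWeight_neg, stableDensity_neg, neg_Ici, neg_zero] at hneg
  rw [← integrableOn_univ, ← Iic_union_Ioi (a := (0 : ℝ))]
  exact hneg.union hpos

end StableDensity

lemma IsLevyDensity.bdd_mul {κ q : ℝ → ℝ} (hκ : IsLevyDensity κ) (hq : Measurable q)
    (hq0 : ∀ x, 0 ≤ q x) {M : ℝ} (hqM : ∀ x, q x ≤ M) : IsLevyDensity fun v => q v * κ v := by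
  refine ⟨hq.mul hκ.measurable, fun v => mul_nonneg (hq0 v) (hκ.nonneg v), ?_⟩
  refine (hκ.integrable.const_mul M).mono' (by have := hκ.measurable; fun_prop)
    (ae_of_all _ fun v => ?_)
  rw [mul_left_comm, norm_mul, Real.norm_of_nonneg (hq0 v),
    Real.norm_of_nonneg (mul_nonneg (jumpWeight_nonneg v) (hκ.nonneg v))]
  exact mul_le_mul_of_nonneg_right (hqM v) (mul_nonneg (jumpWeight_nonneg v) (hκ.nonneg v))

section Tempering

variable {Y Cp Cm M : ℝ} {q : ℝ → ℝ} (hCp : 0 ≤ Cp) (hCm : 0 ≤ Cm)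

include hCp hCm

omit hCp hCm in
lemma integrableOn_taylor_remainder_mul_stableDensity {αp αm : ℝ}
    (hp : IntegrableOn (fun x => |q x - 1 - αp * x| * x ^ (-Y - 1)) (Ioc 0 1))
    (hm : IntegrableOn (fun x => |q x - 1 - αm * x| * |x| ^ (-Y - 1)) (Ico (-1) 0)) :
    IntegrableOn (fun x => |q x - 1 - (if 0 < x then αp else αm) * x| * stableDensity Y Cp Cm x)
      (Icc (-1) 1) := by
  rw [← Ico_union_Icc_eq_Icc (b := 0) (by norm_num) (by norm_num)]
  refine IntegrableOn.union ?_ ((integrableOn_Icc_iff_integrableOn_Ioc).2 ?_)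
  · refine IntegrableOn.congr_fun (Integrable.const_mul hm Cm) (fun x hx => ?_) measurableSet_Ico
    simp only [if_neg hx.2.not_gt, stableDensity_of_neg hx.2, abs_of_neg hx.2]
    ring_nf
  · refine IntegrableOn.congr_fun (Integrable.const_mul hp Cp) (fun x hx => ?_) measurableSet_Ioc
    simp only [if_pos hx.1, stableDensity_of_pos hx.1]
    ring_nf

lemma exists_abs_sub_one_mul_stableDensity_le (hq0 : ∀ x, 0 ≤ q x) (hqM : ∀ x, q x ≤ M)
    {αp αm : ℝ}
    (hp : IntegrableOn (fun x => |q x - 1 - αp * x| * x ^ (-Y - 1)) (Ioc 0 1))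
    (hm : IntegrableOn (fun x => |q x - 1 - αm * x| * |x| ^ (-Y - 1)) (Ico (-1) 0)) :
    ∃ (G : ℝ → ℝ) (K : ℝ), Integrable G ∧ (∀ x, 0 ≤ G x) ∧
      ∀ x, |q x - 1| * stableDensity Y Cp Cm x ≤ G x + K * stableDensity (Y - 1) Cp Cm x := by
  set α : ℝ → ℝ := fun x => if 0 < x then αp else αm
  have hM : 0 ≤ M := (hq0 0).trans (hqM 0)
  have hstable := stableDensity_nonneg (Y := Y) hCp hCm
  refine ⟨(Icc (-1) 1).indicator fun x => |q x - 1 - α x * x| * stableDensity Y Cp Cm x,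
    |αp| + |αm| + M + 1,
    (integrableOn_taylor_remainder_mul_stableDensity hp hm).integrable_indicator measurableSet_Icc,
    indicator_nonneg fun x _ => mul_nonneg (abs_nonneg _) (hstable x), fun x => ?_⟩
  rw [← abs_mul_stableDensity, ← mul_assoc]
  have hαp := abs_nonneg αp
  have hαm := abs_nonneg αm
  by_cases hx : x ∈ Icc (-1) 1
  · have hα : |α x| ≤ |αp| + |αm| + M + 1 := by
      simp only [α]
      split_ifs <;> linarith
    rw [indicator_of_mem hx, ← add_mul]
    refine mul_le_mul_of_nonneg_right ?_ (hstable x)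
    calc |q x - 1| ≤ |q x - 1 - α x * x| + |α x * x| := by
          simpa using abs_add_le (q x - 1 - α x * x) (α x * x)
      _ ≤ |q x - 1 - α x * x| + (|αp| + |αm| + M + 1) * |x| := by
          rw [abs_mul]
          gcongr
  · have hx1 : 1 ≤ |x| := by
      by_contra! h
      exact hx (abs_le.1 h.le)
    have hqx : |q x - 1| ≤ |αp| + |αm| + M + 1 :=
      abs_le.2 ⟨by linarith [hq0 x], by linarith [hqM x]⟩
    rw [indicator_of_notMem hx, zero_add]
    exact mul_le_mul_of_nonneg_right
      (hqx.trans (le_mul_of_one_le_right (by positivity) hx1)) (hstable x)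

omit hCp hCm in
lemma jumpWeight_mul_abs_sub_one_mul_stableDensity_le {G : ℝ → ℝ} {K : ℝ} (hG0 : ∀ x, 0 ≤ G x)
    (hqG : ∀ x, |q x - 1| * stableDensity Y Cp Cm x ≤ G x + K * stableDensity (Y - 1) Cp Cm x)
    {e : ℝ} (he : 0 < e) (v : ℝ) :
    jumpWeight v * (|q (e * v) - 1| * stableDensity Y Cp Cm v) ≤
      e ^ (1 + Y) * G (e * v) + K * e * (jumpWeight v * stableDensity (Y - 1) Cp Cm v) := by
  have hpow : e ^ (1 + Y) * e ^ (-1 - Y) = 1 := by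
    rw [← Real.rpow_add he]
    norm_num
  have hpow' : e ^ (1 + Y) * e ^ (-1 - (Y - 1)) = e := by
    rw [← Real.rpow_add he]
    ring_nf
    exact Real.rpow_one e
  have hweighted := mul_le_mul_of_nonneg_left (hqG (e * v)) (jumpWeight_nonneg v)
  rw [stableDensity_mul he, stableDensity_mul he] at hweighted
  have hGw : jumpWeight v * G (e * v) ≤ G (e * v) :=
    mul_le_of_le_one_left (hG0 _) (jumpWeight_le_one v)
  calc jumpWeight v * (|q (e * v) - 1| * stableDensity Y Cp Cm v)
      = e ^ (1 + Y) * (jumpWeight v *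
          (|q (e * v) - 1| * (e ^ (-1 - Y) * stableDensity Y Cp Cm v))) := by
        linear_combination (-(jumpWeight v * |q (e * v) - 1| * stableDensity Y Cp Cm v)) * hpow
    _ ≤ e ^ (1 + Y) * (G (e * v) + jumpWeight v *
          (K * (e ^ (-1 - (Y - 1)) * stableDensity (Y - 1) Cp Cm v))) := by
        gcongr
        linarith
    _ = e ^ (1 + Y) * G (e * v) + K * e * (jumpWeight v * stableDensity (Y - 1) Cp Cm v) := by
        linear_combination (K * jumpWeight v * stableDensity (Y - 1) Cp Cm v) * hpow'

lemma integral_jumpWeight_mul_abs_sub_one_le (hY1 : 1 < Y) (hY2 : Y < 2)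
    {G : ℝ → ℝ} {K : ℝ} (hG : Integrable G) (hG0 : ∀ x, 0 ≤ G x)
    (hqG : ∀ x, |q x - 1| * stableDensity Y Cp Cm x ≤ G x + K * stableDensity (Y - 1) Cp Cm x)
    {e : ℝ} (he : 0 < e) (he1 : e ≤ 1) :
    ∫ v, jumpWeight v * (|q (e * v) - 1| * stableDensity Y Cp Cm v) ≤
      ((∫ x, G x) + K * ∫ v, jumpWeight v * stableDensity (Y - 1) Cp Cm v) * e := by
  have hstable := stableDensity_nonneg (Y := Y) hCp hCm
  have hGe : Integrable fun v => e ^ (1 + Y) * G (e * v) :=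
    (hG.comp_mul_left' he.ne').const_mul _
  have hlevy := ((isLevyDensity_stableDensity hCp hCm (by linarith) (by linarith :
    Y - 1 < 2)).integrable).const_mul (K * e)
  calc ∫ v, jumpWeight v * (|q (e * v) - 1| * stableDensity Y Cp Cm v)
      ≤ ∫ v, (e ^ (1 + Y) * G (e * v) +
          K * e * (jumpWeight v * stableDensity (Y - 1) Cp Cm v)) :=
        integral_mono_of_nonneg (ae_of_all _ fun v => mul_nonneg (jumpWeight_nonneg v)
          (mul_nonneg (abs_nonneg _) (hstable v))) (hGe.add hlevy)
          (ae_of_all _ (jumpWeight_mul_abs_sub_one_mul_stableDensity_le hG0 hqG he))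
    _ = e ^ Y * (∫ x, G x) + (K * ∫ v, jumpWeight v * stableDensity (Y - 1) Cp Cm v) * e := by
        rw [integral_add hGe hlevy, integral_const_mul, integral_const_mul,
          Measure.integral_comp_mul_left, abs_of_pos (inv_pos.2 he), smul_eq_mul, add_comm 1 Y,
          Real.rpow_add_one he.ne']
        field_simp
    _ ≤ ((∫ x, G x) + K * ∫ v, jumpWeight v * stableDensity (Y - 1) Cp Cm v) * e := by
        have heY : e ^ Y ≤ e := by
          simpa using Real.rpow_le_rpow_of_exponent_ge he he1 hY1.le
        linarith [mul_le_mul_of_nonneg_right heY (integral_nonneg (μ := volume) hG0)]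

end Tempering

/-- The Lévy density of `J_h / e`, where `h` and `e` are the time and the unit of length. -/
def rescaledDensity (Y Cp Cm : ℝ) (q : ℝ → ℝ) (h e v : ℝ) : ℝ :=
  h * e ^ (-Y) * q (e * v) * stableDensity Y Cp Cm v

/-- The truncation function `1_{|x| ≤ 1}` of `psiJ` in the rescaled variable `v = x / e`. -/
def unitTruncation (e v : ℝ) : ℝ := if |e * v| ≤ 1 then 1 else 0

/-- The drift of `J_h / e` with respect to the truncation function `smallBump`. -/
def rescaledDrift (b Y Cp Cm : ℝ) (q : ℝ → ℝ) (h e : ℝ) : ℝ :=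
  h * b / e - ∫ v, (unitTruncation e v - smallBump v) * v * rescaledDensity Y Cp Cm q h e v

section Rescaling

lemma measurable_unitTruncation (e : ℝ) : Measurable (unitTruncation e) :=
  Measurable.ite (measurableSet_le (by fun_prop) measurable_const) measurable_const
    measurable_const

lemma abs_unitTruncation_sub_smallBump_le {e : ℝ} (he : 0 ≤ e) (he1 : e ≤ 1) (v : ℝ) :
    |unitTruncation e v - smallBump v| ≤ 256 * jumpWeight v := by
  obtain hv | hv := le_total |v| 1
  · have hev : |e * v| ≤ 1 := by
      rw [abs_mul, abs_of_nonneg he]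
      exact mul_le_one₀ he1 (abs_nonneg v) hv
    rw [unitTruncation, if_pos hev, abs_of_nonneg (sub_nonneg.2 smallBump.le_one)]
    exact one_sub_smallBump_le v
  · rw [smallBump_eq_zero (by linarith), jumpWeight_of_one_le_abs hv, unitTruncation]
    split_ifs <;> norm_num

lemma abs_unitTruncation_sub_smallBump_mul_le {e : ℝ} (he : 0 < e) (he1 : e ≤ 1) (v : ℝ) :
    |(unitTruncation e v - smallBump v) * v| ≤ 256 / e * jumpWeight v := by
  rw [abs_mul]
  obtain hv | hv := le_or_gt |v| (1 / e)
  · calc |unitTruncation e v - smallBump v| * |v| ≤ 256 * jumpWeight v * (1 / e) :=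
          mul_le_mul (abs_unitTruncation_sub_smallBump_le he.le he1 v) hv (abs_nonneg v)
            (mul_nonneg (by norm_num) (jumpWeight_nonneg v))
      _ = 256 / e * jumpWeight v := by ring
  · have hev : ¬|e * v| ≤ 1 := by
      rw [abs_mul, abs_of_pos he, not_le, mul_comm]
      exact (div_lt_iff₀ he).1 hv
    have hv1 : 1 / 8 ≤ |v| := by linarith [(one_le_div he).2 he1]
    rw [unitTruncation, if_neg hev, smallBump_eq_zero hv1]
    simpa using mul_nonneg (by positivity) (jumpWeight_nonneg v)

variable {Y Cp Cm M h e : ℝ} {q : ℝ → ℝ}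

lemma rescaledDensity_eq (he : 0 < e) (v : ℝ) :
    rescaledDensity Y Cp Cm q h e v = h * e * levyDensity Y Cp Cm q (e * v) := by
  rw [rescaledDensity, levyDensity_eq_mul_stableDensity, stableDensity_mul he, sub_eq_add_neg,
    Real.rpow_add he, Real.rpow_neg_one]
  field_simp

variable (hCp : 0 ≤ Cp) (hCm : 0 ≤ Cm) (hq : Measurable q) (hq0 : ∀ x, 0 ≤ q x)

include hCp hCm hq0 in
lemma levyDensity_nonneg (x : ℝ) : 0 ≤ levyDensity Y Cp Cm q x := by
  rw [levyDensity_eq_mul_stableDensity]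
  exact mul_nonneg (hq0 x) (stableDensity_nonneg hCp hCm x)

include hq in
lemma measurable_levyDensity : Measurable (levyDensity Y Cp Cm q) := by
  have h : levyDensity Y Cp Cm q = q * stableDensity Y Cp Cm :=
    funext (levyDensity_eq_mul_stableDensity q)
  exact h ▸ hq.mul measurable_stableDensity

include hCp hCm hq hq0

lemma mul_integral_levyMeasure {E : Type*} [NormedAddCommGroup E] [NormedSpace ℝ E]
    (he : 0 < e) (f : ℝ → E) : h • ∫ x, f (e⁻¹ * x) ∂levyMeasure Y Cp Cm q =
      ∫ v, rescaledDensity Y Cp Cm q h e v • f v := by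
  have hscale := Measure.integral_comp_div (fun v => levyDensity Y Cp Cm q (e * v) • f v) e
  simp only [div_eq_inv_mul, mul_inv_cancel_left₀ he.ne', abs_of_pos he] at hscale
  rw [show levyMeasure Y Cp Cm q = densityMeasure (levyDensity Y Cp Cm q) from rfl,
    integral_densityMeasure (measurable_levyDensity hq) (levyDensity_nonneg hCp hCm hq0)]
  simp only [rescaledDensity_eq he, mul_smul, integral_smul]
  rw [hscale]

lemma isLevyDensity_rescaledDensity (hY0 : 0 < Y) (hY2 : Y < 2) (hqM : ∀ x, q x ≤ M)
    (hh : 0 ≤ h) (he : 0 < e) : IsLevyDensity (rescaledDensity Y Cp Cm q h e) :=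
  (isLevyDensity_stableDensity hCp hCm hY0 hY2).bdd_mul (M := h * e ^ (-Y) * M)
    (by fun_prop) (fun v => mul_nonneg (by positivity) (hq0 _))
    (fun v => mul_le_mul_of_nonneg_left (hqM _) (by positivity))

lemma mul_psiJ_eq_levyExponent (hY0 : 0 < Y) (hY2 : Y < 2) (hqM : ∀ x, q x ≤ M)
    (hh : 0 ≤ h) (he : 0 < e) (he1 : e ≤ 1) (b u : ℝ) : h * psiJ b Y Cp Cm q (e⁻¹ * u) =
      levyExponent (rescaledDrift b Y Cp Cm q h e) (rescaledDensity Y Cp Cm q h e) u := by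
  have hκ := isLevyDensity_rescaledDensity hCp hCm hq hq0 hY0 hY2 hqM hh he
  have hint := mul_integral_levyMeasure (Y := Y) (h := h) hCp hCm hq hq0 he fun v : ℝ =>
    Complex.exp (Complex.I * u * v) - 1 - unitTruncation e v * (Complex.I * u * v)
  rw [rescaledDrift, hκ.levyExponent_sub_integral (measurable_unitTruncation e)
    (abs_unitTruncation_sub_smallBump_mul_le he he1), ← hint, psiJ, mul_add, Complex.real_smul]
  congr 1
  · push_cast
    ring
  · congr 2 with x
    have hux : Complex.I * (e⁻¹ * u : ℝ) * x = Complex.I * u * (e⁻¹ * x : ℝ) := by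
      push_cast
      ring
    rw [hux, unitTruncation, mul_inv_cancel_left₀ he.ne']
    split_ifs <;> simp

omit hq hq0 in
lemma rescaledDensity_le (hqM : ∀ x, q x ≤ M) (hh : 0 ≤ h) (he : 0 ≤ e) (v : ℝ) :
    rescaledDensity Y Cp Cm q h e v ≤ h * e ^ (-Y) * M * stableDensity Y Cp Cm v :=
  mul_le_mul_of_nonneg_right (mul_le_mul_of_nonneg_left (hqM _) (by positivity))
    (stableDensity_nonneg hCp hCm v)

omit hq in
lemma rescaledDensity_nonneg (hh : 0 ≤ h) (he : 0 ≤ e) (v : ℝ) :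
    0 ≤ rescaledDensity Y Cp Cm q h e v :=
  mul_nonneg (mul_nonneg (by positivity) (hq0 _)) (stableDensity_nonneg hCp hCm v)

omit hq in
lemma integral_jumpWeight_mul_rescaledDensity_le (hY0 : 0 < Y) (hY2 : Y < 2)
    (hqM : ∀ x, q x ≤ M) (hh : 0 ≤ h) (he : 0 ≤ e) :
    ∫ v, jumpWeight v * rescaledDensity Y Cp Cm q h e v ≤
      h * e ^ (-Y) * M * ∫ v, jumpWeight v * stableDensity Y Cp Cm v := by
  rw [← integral_const_mul]
  refine integral_mono_of_nonneg (ae_of_all _ fun v => mul_nonneg (jumpWeight_nonneg v)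
      (rescaledDensity_nonneg hCp hCm hq0 hh he v))
    ((isLevyDensity_stableDensity hCp hCm hY0 hY2).integrable.const_mul _)
    (ae_of_all _ fun v => ?_)
  simpa only [mul_left_comm] using
    mul_le_mul_of_nonneg_left (rescaledDensity_le hCp hCm hqM hh he v) (jumpWeight_nonneg v)

omit hq in
lemma abs_integral_truncation_change_le (hY1 : 1 < Y) (hY2 : Y < 2) (hqM : ∀ x, q x ≤ M)
    (hh : 0 ≤ h) (he : 0 < e) (he1 : e ≤ 1) :
    |∫ v, (unitTruncation e v - smallBump v) * v * rescaledDensity Y Cp Cm q h e v| ≤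
      256 * (h * e ^ (-Y) * M) * ∫ v, jumpWeight v * stableDensity (Y - 1) Cp Cm v := by
  have hstable := isLevyDensity_stableDensity hCp hCm (by linarith) (by linarith : Y - 1 < 2)
  have hκ0 := rescaledDensity_nonneg (Y := Y) hCp hCm hq0 hh he.le
  rw [← integral_const_mul, ← Real.norm_eq_abs]
  refine norm_integral_le_of_norm_le (hstable.integrable.const_mul _) (ae_of_all _ fun v => ?_)
  rw [norm_mul, norm_mul, Real.norm_of_nonneg (hκ0 v), ← abs_mul_stableDensity]
  calc |unitTruncation e v - smallBump v| * |v| * rescaledDensity Y Cp Cm q h e v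
      ≤ 256 * jumpWeight v * |v| * (h * e ^ (-Y) * M * stableDensity Y Cp Cm v) :=
        mul_le_mul (mul_le_mul_of_nonneg_right (abs_unitTruncation_sub_smallBump_le he.le he1 v)
          (abs_nonneg v)) (rescaledDensity_le hCp hCm hqM hh he.le v) (hκ0 v)
          (mul_nonneg (mul_nonneg (by norm_num) (jumpWeight_nonneg v)) (abs_nonneg v))
    _ = 256 * (h * e ^ (-Y) * M) * (jumpWeight v * (|v| * stableDensity Y Cp Cm v)) := by ring

omit hq in
lemma levySize_rescaled_le (hY1 : 1 < Y) (hY2 : Y < 2) (hqM : ∀ x, q x ≤ M)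
    (hh : 0 ≤ h) (he : 0 < e) (he1 : e ≤ 1) (b : ℝ) :
    levySize (rescaledDrift b Y Cp Cm q h e) (rescaledDensity Y Cp Cm q h e) ≤
      (|b| + 256 * M * (∫ v, jumpWeight v * stableDensity (Y - 1) Cp Cm v) +
        M * ∫ v, jumpWeight v * stableDensity Y Cp Cm v) * (h * e ^ (-Y)) := by
  have hdrift : |h * b / e| ≤ |b| * (h * e ^ (-Y)) := by
    have heY : e⁻¹ ≤ e ^ (-Y) := by
      simpa [Real.rpow_neg_one] using
        Real.rpow_le_rpow_of_exponent_ge he he1 (by linarith : -Y ≤ -1)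
    rw [abs_div, abs_mul, abs_of_nonneg hh, abs_of_pos he, div_eq_mul_inv, mul_comm h, mul_assoc]
    gcongr
  have htruncation := abs_integral_truncation_change_le hCp hCm hq0 hY1 hY2 hqM hh he he1
  have hmass := integral_jumpWeight_mul_rescaledDensity_le hCp hCm hq0 (by linarith) hY2 hqM hh
    he.le
  rw [levySize, rescaledDrift]
  linarith [abs_sub (h * b / e)
    (∫ v, (unitTruncation e v - smallBump v) * v * rescaledDensity Y Cp Cm q h e v)]

omit hq hq0 in
lemma integral_jumpWeight_mul_abs_rescaledDensity_sub (hh : 0 ≤ h) (he : 0 < e) :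
    ∫ v, jumpWeight v * |rescaledDensity Y Cp Cm q h e v - h * e ^ (-Y) * stableDensity Y Cp Cm v| =
      h * e ^ (-Y) * ∫ v, jumpWeight v * (|q (e * v) - 1| * stableDensity Y Cp Cm v) := by
  rw [← integral_const_mul]
  congr with v
  have hfactor : rescaledDensity Y Cp Cm q h e v - h * e ^ (-Y) * stableDensity Y Cp Cm v =
      h * e ^ (-Y) * (q (e * v) - 1) * stableDensity Y Cp Cm v := by
    rw [rescaledDensity]
    ring
  rw [hfactor, abs_mul, abs_mul, abs_of_nonneg (stableDensity_nonneg hCp hCm v),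
    abs_of_nonneg (by positivity : 0 ≤ h * e ^ (-Y))]
  ring

end Rescaling

/-! ### Truncated powers at unit scale -/

/-- The functional `v^{2k}·1_{|w+v| ≤ 1}` of the jump part `v` of a sum `w + v`. -/
def truncatedPow (k : ℕ) (w v : ℝ) : ℝ :=
  v ^ (2 * k) * indicator {x | |x| ≤ 1} (fun _ => 1) (w + v)

section TruncatedPow

variable {k : ℕ} {w v : ℝ}

lemma truncatedPow_of_abs_add_le_one (h : |w + v| ≤ 1) : truncatedPow k w v = v ^ (2 * k) := by
  simp [truncatedPow, h]

lemma truncatedPow_of_one_lt_abs_add (h : 1 < |w + v|) : truncatedPow k w v = 0 := by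
  simp [truncatedPow, h.not_ge]

lemma measurable_truncatedPow (k : ℕ) : Measurable fun z : ℝ × ℝ => truncatedPow k z.1 z.2 := by
  have hind : Measurable (indicator {x : ℝ | |x| ≤ 1} fun _ => (1 : ℝ)) :=
    measurable_const.indicator (measurableSet_le (by fun_prop) measurable_const)
  unfold truncatedPow
  fun_prop

lemma abs_truncatedPow_le (hk : 1 ≤ k) (w v : ℝ) :
    |truncatedPow k w v| ≤ (1 + |w|) ^ (2 * k) * jumpWeight v := by
  have hw : 1 ≤ 1 + |w| := le_add_of_nonneg_right (abs_nonneg w)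
  obtain h | h := le_or_gt |w + v| 1
  · rw [truncatedPow_of_abs_add_le_one h, abs_pow]
    obtain hv | hv := le_total |v| 1
    · rw [jumpWeight_of_abs_le_one hv, ← sq_abs v]
      exact (pow_le_pow_of_le_one (abs_nonneg v) hv (by omega)).trans
        (le_mul_of_one_le_left (by positivity) (one_le_pow₀ hw))
    · rw [jumpWeight_of_one_le_abs hv, mul_one]
      gcongr
      simpa using (abs_sub (w + v) w).trans (add_le_add_left h |w|)
  · rw [truncatedPow_of_one_lt_abs_add h, abs_zero]
    exact mul_nonneg (by positivity) (jumpWeight_nonneg v)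

end TruncatedPow

section StableMoment

variable {p r : ℝ}

lemma integrable_indicator_rpow (hp : 0 < p) (hr : 0 ≤ r) :
    Integrable ((Ioc 0 r).indicator fun v => v ^ (p - 1)) := by
  rw [integrable_indicator_iff measurableSet_Ioc,
    ← intervalIntegrable_iff_integrableOn_Ioc_of_le hr]
  exact intervalIntegral.intervalIntegrable_rpow' (by linarith)

lemma integral_indicator_rpow (hp : 0 < p) (hr : 0 ≤ r) :
    ∫ v, (Ioc 0 r).indicator (fun v => v ^ (p - 1)) v = r ^ p / p := by
  rw [integral_indicator measurableSet_Ioc, ← intervalIntegral.integral_of_le hr,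
    integral_rpow (Or.inl (by linarith))]
  simp [Real.zero_rpow hp.ne']

variable {Y Cp Cm w : ℝ} {k : ℕ}

lemma truncatedPow_mul_stableDensity_of_pos {v : ℝ} (hw : |w| ≤ 1) (hv : 0 < v) :
    truncatedPow k w v * stableDensity Y Cp Cm v =
      Cp * (Ioc 0 (1 - w)).indicator (fun v => v ^ (2 * (k : ℝ) - Y - 1)) v := by
  have hpow : v ^ (2 * k) * v ^ (-1 - Y) = v ^ (2 * (k : ℝ) - Y - 1) := by
    rw [← Real.rpow_natCast, ← Real.rpow_add hv]
    push_cast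
    ring_nf
  rw [stableDensity_of_pos hv]
  obtain h | h := le_or_gt v (1 - w)
  · rw [indicator_of_mem (show v ∈ Ioc 0 (1 - w) from ⟨hv, h⟩), truncatedPow_of_abs_add_le_one
      (abs_le.2 ⟨by linarith [neg_le_of_abs_le hw], by linarith⟩), ← hpow]
    ring
  · rw [indicator_of_notMem fun hmem => h.not_ge hmem.2,
      truncatedPow_of_one_lt_abs_add (lt_abs.2 (Or.inl (by linarith)))]
    ring

lemma truncatedPow_neg (w v : ℝ) : truncatedPow k w (-v) = truncatedPow k (-w) v := by
  have habs : |w + -v| = |-w + v| := by rw [← abs_neg, neg_add, neg_neg]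
  simp only [truncatedPow, indicator, mem_ofPred_eq, habs, Even.neg_pow (even_two_mul k)]

lemma truncatedPow_mul_stableDensity (hw : |w| ≤ 1) (v : ℝ) :
    truncatedPow k w v * stableDensity Y Cp Cm v =
      Cp * (Ioc 0 (1 - w)).indicator (fun v => v ^ (2 * (k : ℝ) - Y - 1)) v +
        Cm * (Ioc 0 (1 + w)).indicator (fun v => v ^ (2 * (k : ℝ) - Y - 1)) (-v) := by
  obtain hv | rfl | hv := lt_trichotomy v 0
  · have hreflect := truncatedPow_mul_stableDensity_of_pos (Y := Y) (Cp := Cm) (Cm := Cp) (k := k)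
      (w := -w) (by rwa [abs_neg]) (neg_pos.2 hv)
    rw [truncatedPow_neg, stableDensity_neg, neg_neg, sub_neg_eq_add] at hreflect
    rw [hreflect, indicator_of_notMem (a := v) fun hmem => hv.not_gt hmem.1, mul_zero, zero_add]
  · simp
  · rw [truncatedPow_mul_stableDensity_of_pos hw hv,
      indicator_of_notMem (a := -v) fun hmem => hv.not_gt (neg_pos.1 hmem.1), mul_zero, add_zero]

lemma integral_truncatedPow_mul_stableDensity (hY : Y < 2 * k) (hw : |w| ≤ 1) :
    ∫ v, truncatedPow k w v * stableDensity Y Cp Cm v =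
      (Cp * (1 - w) ^ (2 * (k : ℝ) - Y) + Cm * (1 + w) ^ (2 * (k : ℝ) - Y)) / (2 * k - Y) := by
  obtain ⟨hw₁, hw₂⟩ := abs_le.1 hw
  have hp : 0 < 2 * (k : ℝ) - Y := sub_pos.2 hY
  simp_rw [truncatedPow_mul_stableDensity hw]
  rw [integral_add ((integrable_indicator_rpow hp (by linarith)).const_mul _)
      ((integrable_indicator_rpow hp (by linarith)).comp_neg.const_mul _),
    integral_const_mul, integral_const_mul, integral_indicator_rpow hp (by linarith),
    integral_neg_eq_self ((Ioc 0 (1 + w)).indicator fun v => v ^ (2 * (k : ℝ) - Y - 1)),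
    integral_indicator_rpow hp (by linarith)]
  ring

end StableMoment

lemma exists_abs_one_sub_rpow_add_one_add_rpow_sub_two_le (p : ℝ) :
    ∃ C, 0 ≤ C ∧ ∀ w : ℝ, |w| ≤ 1 / 4 → |(1 - w) ^ p + (1 + w) ^ p - 2| ≤ C * w ^ 2 := by
  set f : ℝ → ℝ := fun w => (1 - w) ^ p + (1 + w) ^ p
  have hf : ContDiffOn ℝ 2 f (Icc 0 (1 / 4)) := fun w hw =>
    ((((contDiff_const.sub contDiff_id).contDiffAt.rpow_const_of_ne (by
      simp only [id]; linarith [hw.2])).add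
    ((contDiff_const.add contDiff_id).contDiffAt.rpow_const_of_ne (by
      simp only [id]; linarith [hw.1]))).contDiffWithinAt)
  have hderiv : derivWithin f (Icc 0 (1 / 4)) 0 = 0 := by
    have hd : HasDerivAt f (-1 * p * (1 - 0) ^ (p - 1) + 1 * p * (1 + 0) ^ (p - 1)) 0 :=
      (((hasDerivAt_id 0).const_sub 1).rpow_const (by simp)).add
        (((hasDerivAt_id 0).const_add 1).rpow_const (by simp))
    rw [hd.hasDerivWithinAt.derivWithin (uniqueDiffOn_Icc (by norm_num) 0 (by norm_num))]
    simp
  obtain ⟨C, hC⟩ := exists_taylor_mean_remainder_bound (n := 1) (by norm_num) hf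
  refine ⟨|C|, abs_nonneg C, fun w hw => ?_⟩
  have heven : f |w| = f w := by
    obtain h | h := abs_choice w
    · rw [h]
    · rw [h]
      simp only [f, sub_neg_eq_add, ← sub_eq_add_neg]
      exact add_comm _ _
  have htaylor := hC |w| ⟨abs_nonneg w, hw⟩
  rw [taylorWithinEval_succ, taylor_within_zero_eval, iteratedDerivWithin_one, hderiv, heven,
    sub_zero, sq_abs] at htaylor
  have hf0 : f 0 = 2 := by norm_num [f]
  simp only [hf0, smul_zero, add_zero, Real.norm_eq_abs] at htaylor
  exact htaylor.trans (mul_le_mul_of_nonneg_right (le_abs_self C) (sq_nonneg w))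

section SymmetrizedMoment

variable {Y Cp Cm : ℝ} {k : ℕ}

lemma exists_abs_integral_truncatedPow_sub_le (hCp : 0 ≤ Cp) (hCm : 0 ≤ Cm) (hY0 : 0 < Y)
    (hY2 : Y < 2) (hk : 1 ≤ k) :
    ∃ C, 0 ≤ C ∧ ∀ (κ : ℝ → ℝ) (m : Measure ℝ) [IsProbabilityMeasure m] (c t w : ℝ),
      IsLevyDensity κ → (∀ u, charFun m u = Complex.exp (levyExponent c κ u)) → 0 ≤ t →
      |w| ≤ 1 / 4 →
      |(∫ v, truncatedPow k w v ∂m) - t * ((Cp * (1 - w) ^ (2 * (k : ℝ) - Y) +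
          Cm * (1 + w) ^ (2 * (k : ℝ) - Y)) / (2 * k - Y))| ≤
        C * (levySize c κ ^ 2 + t * levySize c κ +
          ∫ v, jumpWeight v * |κ v - t * stableDensity Y Cp Cm v|) := by
  have hk' : Y < 2 * k := by
    have : (1 : ℝ) ≤ k := by exact_mod_cast hk
    linarith
  have hzero : (0 : ℝ) ^ (2 * k) = 0 := zero_pow (by omega)
  have hderiv : deriv (fun v => farBump v * v ^ (2 * k)) 0 = 0 := by
    have hbump : DifferentiableAt ℝ farBump 0 :=
      (farBump.contDiff (n := 1)).differentiable one_ne_zero 0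
    rw [deriv_fun_mul hbump (by fun_prop), deriv_pow_field]
    simp [hzero, show 2 * k - 1 ≠ 0 by omega]
  obtain ⟨C, hC, hestimate⟩ := exists_abs_integral_sub_mul_integral_le
    (isLevyDensity_stableDensity hCp hCm hY0 hY2) contDiffOn_stableDensity
    (farBump.contDiff.mul (contDiff_id.pow (2 * k))) farBump.hasCompactSupport.mul_right
    (by simp [hzero]) hderiv (by positivity : (0 : ℝ) ≤ (5 / 4) ^ (2 * k))
  refine ⟨C, hC, fun κ m _ c t w hκ hm ht hw => ?_⟩
  rw [← integral_truncatedPow_mul_stableDensity hk' (by linarith)]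
  refine hestimate κ m c t _ hκ hm ht (measurable_truncatedPow k).of_uncurry_left (fun v => ?_)
    (fun v hv => ?_) (fun v hv => ?_)
  · refine (abs_truncatedPow_le hk w v).trans (mul_le_mul_of_nonneg_right ?_ (jumpWeight_nonneg v))
    exact pow_le_pow_left₀ (by positivity) (by linarith) _
  · rw [truncatedPow_of_abs_add_le_one (by linarith [abs_add_le w v]),
      farBump_eq_one (by linarith), one_mul, id]
  · refine truncatedPow_of_one_lt_abs_add ?_
    have htriangle := abs_sub (w + v) w
    rw [add_sub_cancel_left] at htriangle
    linarith

lemma exists_abs_integral_truncatedPow_add_neg_sub_le_of_abs_le (hCp : 0 ≤ Cp) (hCm : 0 ≤ Cm)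
    (hY0 : 0 < Y) (hY2 : Y < 2) (hk : 1 ≤ k) :
    ∃ C, 0 ≤ C ∧ ∀ (κ : ℝ → ℝ) (m : Measure ℝ) [IsProbabilityMeasure m] (c t w : ℝ),
      IsLevyDensity κ → (∀ u, charFun m u = Complex.exp (levyExponent c κ u)) → 0 ≤ t →
      |w| ≤ 1 / 4 →
      |(∫ v, truncatedPow k w v ∂m) + (∫ v, truncatedPow k (-w) v ∂m) -
          2 * (t * ((Cp + Cm) / (2 * k - Y)))| ≤
        C * (levySize c κ ^ 2 + t * levySize c κ +
          (∫ v, jumpWeight v * |κ v - t * stableDensity Y Cp Cm v|) + t * w ^ 2) := by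
  obtain ⟨C, hC, hmoment⟩ := exists_abs_integral_truncatedPow_sub_le hCp hCm hY0 hY2 hk
  obtain ⟨D, hD, heven⟩ := exists_abs_one_sub_rpow_add_one_add_rpow_sub_two_le (2 * (k : ℝ) - Y)
  set B := |(Cp + Cm) / (2 * k - Y)|
  refine ⟨2 * C + B * D, by positivity, fun κ m _ c t w hκ hm ht hw => ?_⟩
  have hplus := hmoment κ m c t w hκ hm ht hw
  have hminus := hmoment κ m c t (-w) hκ hm ht (by rwa [abs_neg])
  rw [sub_neg_eq_add, ← sub_eq_add_neg] at hminus
  set T := levySize c κ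
  set δ := ∫ v, jumpWeight v * |κ v - t * stableDensity Y Cp Cm v|
  have hT : 0 ≤ T := hκ.levySize_nonneg c
  have hδ : 0 ≤ δ := integral_nonneg fun v => mul_nonneg (jumpWeight_nonneg v) (abs_nonneg _)
  have hmain : |t * ((Cp + Cm) / (2 * k - Y)) *
      ((1 - w) ^ (2 * (k : ℝ) - Y) + (1 + w) ^ (2 * (k : ℝ) - Y) - 2)| ≤ t * B * (D * w ^ 2) := by
    rw [abs_mul, abs_mul, abs_of_nonneg ht]
    exact mul_le_mul_of_nonneg_left (heven w hw) (by positivity)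
  have hnonneg : 0 ≤ B * D * (T ^ 2 + t * T + δ) + 2 * C * (t * w ^ 2) := by positivity
  refine (le_of_eq (congrArg abs ?_)).trans ((abs_add_le _ _).trans
    ((add_le_add ((abs_add_le _ _).trans (add_le_add hplus hminus)) hmain).trans ?_))
  · ring
  · linarith

lemma exists_abs_integral_truncatedPow_add_neg_sub_le_of_lt_abs (hk : 1 ≤ k) (A : ℝ) :
    ∃ C, ∀ (κ : ℝ → ℝ) (m : Measure ℝ) [IsProbabilityMeasure m] (c t w : ℝ),
      IsLevyDensity κ → (∀ u, charFun m u = Complex.exp (levyExponent c κ u)) → 0 ≤ t →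
      1 / 4 < |w| →
      |(∫ v, truncatedPow k w v ∂m) + (∫ v, truncatedPow k (-w) v ∂m) - 2 * (t * A)| ≤
        C * (t * w ^ 2 + levySize c κ * w ^ (2 * k + 2)) := by
  obtain ⟨C, hC, hweight⟩ := exists_integral_jumpWeight_le
  refine ⟨2 * (5 ^ (2 * k) * 16 * (C * 513)) + 32 * |A|,
    fun κ m _ c t w hκ hm ht hw => ?_⟩
  set T := levySize c κ
  have hT : 0 ≤ T := hκ.levySize_nonneg c
  have hw16 : 1 ≤ 16 * w ^ 2 := by
    rw [← sq_abs]
    nlinarith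
  have hevenpow : 0 ≤ w ^ (2 * k + 2) := Even.pow_nonneg (by simp [parity_simps]) w
  have hpow : (1 + |w|) ^ (2 * k) ≤ 5 ^ (2 * k) * 16 * w ^ (2 * k + 2) := by
    calc (1 + |w|) ^ (2 * k) ≤ (5 * |w|) ^ (2 * k) := by gcongr; linarith
      _ = 5 ^ (2 * k) * w ^ (2 * k) := by rw [mul_pow, Even.pow_abs (even_two_mul k)]
      _ ≤ 5 ^ (2 * k) * w ^ (2 * k) * (16 * w ^ 2) :=
          le_mul_of_one_le_right (mul_nonneg (by positivity) ((even_two_mul k).pow_nonneg w)) hw16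
      _ = 5 ^ (2 * k) * 16 * w ^ (2 * k + 2) := by ring
  have hmoment (w' : ℝ) (hw' : |w'| = |w|) : |∫ v, truncatedPow k w' v ∂m| ≤
      5 ^ (2 * k) * 16 * w ^ (2 * k + 2) * (C * (513 * T)) := by
    refine (abs_integral_le_mul_integral_jumpWeight (abs_truncatedPow_le hk w')).trans ?_
    rw [hw']
    exact mul_le_mul hpow (hweight m (513 * T) (hκ.norm_charFun_sub_one_le hm))
      (integral_nonneg jumpWeight_nonneg) (by positivity)
  have hmain : |2 * (t * A)| ≤ 32 * |A| * (t * w ^ 2) := by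
    rw [abs_mul, abs_mul, abs_of_nonneg ht, abs_two]
    linarith [mul_le_mul_of_nonneg_left hw16 (mul_nonneg ht (abs_nonneg A))]
  have hnonneg : 0 ≤ 2 * (5 ^ (2 * k) * 16 * (C * 513)) * (t * w ^ 2) +
      32 * |A| * (T * w ^ (2 * k + 2)) := by positivity
  refine (abs_sub _ _).trans ((add_le_add ((abs_add_le _ _).trans
    (add_le_add (hmoment w rfl) (hmoment (-w) (abs_neg w)))) hmain).trans ?_)
  linarith

lemma exists_abs_integral_truncatedPow_add_neg_sub_le (hCp : 0 ≤ Cp) (hCm : 0 ≤ Cm)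
    (hY0 : 0 < Y) (hY2 : Y < 2) (hk : 1 ≤ k) :
    ∃ C, 0 ≤ C ∧ ∀ (κ : ℝ → ℝ) (m : Measure ℝ) [IsProbabilityMeasure m] (c t w : ℝ),
      IsLevyDensity κ → (∀ u, charFun m u = Complex.exp (levyExponent c κ u)) → 0 ≤ t →
      |(∫ v, truncatedPow k w v ∂m) + (∫ v, truncatedPow k (-w) v ∂m) -
          2 * (t * ((Cp + Cm) / (2 * k - Y)))| ≤
        C * (levySize c κ ^ 2 + t * levySize c κ +
          (∫ v, jumpWeight v * |κ v - t * stableDensity Y Cp Cm v|) + t * w ^ 2 +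
          levySize c κ * w ^ (2 * k + 2)) := by
  obtain ⟨C, hC, hnear⟩ :=
    exists_abs_integral_truncatedPow_add_neg_sub_le_of_abs_le hCp hCm hY0 hY2 hk
  obtain ⟨D, hfar⟩ :=
    exists_abs_integral_truncatedPow_add_neg_sub_le_of_lt_abs hk ((Cp + Cm) / (2 * k - Y))
  refine ⟨max C D, le_max_of_le_left hC, fun κ m _ c t w hκ hm ht => ?_⟩
  have hT := hκ.levySize_nonneg c
  have hδ : 0 ≤ ∫ v, jumpWeight v * |κ v - t * stableDensity Y Cp Cm v| :=
    integral_nonneg fun v => mul_nonneg (jumpWeight_nonneg v) (abs_nonneg _)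
  have hevenpow : 0 ≤ w ^ (2 * k + 2) := Even.pow_nonneg (by simp [parity_simps]) w
  obtain hw | hw := le_or_gt |w| (1 / 4)
  · refine (hnear κ m c t w hκ hm ht hw).trans (mul_le_mul (le_max_left C D) ?_ (by positivity)
      (le_max_of_le_left hC))
    linarith [mul_nonneg hT hevenpow]
  · refine (hfar κ m c t w hκ hm ht hw).trans (mul_le_mul (le_max_right C D) ?_ (by positivity)
      (le_max_of_le_left hC))
    linarith [mul_nonneg ht hT, sq_nonneg (levySize c κ)]

end SymmetrizedMoment

/-! ### Averaging over the Gaussian part -/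

lemma abs_integral_sub_le_of_abs_add_neg_sub_le {γ : Measure ℝ} [IsProbabilityMeasure γ]
    [γ.IsNegInvariant] {F B : ℝ → ℝ} {A : ℝ} (hF : Integrable F γ) (hB : Integrable B γ)
    (hFB : ∀ w, |F w + F (-w) - 2 * A| ≤ B w) : |(∫ w, F w ∂γ) - A| ≤ (∫ w, B w ∂γ) / 2 := by
  have hsum : Integrable (fun w => F w + F (-w)) γ := hF.add hF.comp_neg
  have hbound : |∫ w, (F w + F (-w) - 2 * A) ∂γ| ≤ ∫ w, B w ∂γ := by
    rw [← Real.norm_eq_abs]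
    exact norm_integral_le_of_norm_le hB (ae_of_all _ hFB)
  rw [integral_sub hsum (integrable_const _), integral_add hF hF.comp_neg,
    integral_neg_eq_self F γ, integral_const, probReal_univ, one_smul, ← two_mul, ← mul_sub,
    abs_mul, abs_two] at hbound
  linarith

lemma isNegInvariant_gaussianReal_zero (v : ℝ≥0) : (gaussianReal 0 v).IsNegInvariant :=
  ⟨(gaussianReal_map_neg (μ := 0) (v := v)).trans (by rw [neg_zero])⟩

lemma integrable_one_add_abs_mul_pow_gaussianReal (μ : ℝ) (v : ℝ≥0) (r : ℝ) (n : ℕ) :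
    Integrable (fun w => (1 + |r * w|) ^ n) (gaussianReal μ v) := by
  have hid : MemLp (id : ℝ → ℝ) n (gaussianReal μ v) := by
    simpa using memLp_id_gaussianReal (μ := μ) (v := v) (n : ℝ≥0)
  have hone : MemLp (fun _ : ℝ => (1 : ℝ)) n (gaussianReal μ v) := memLp_const 1
  have hlin : MemLp (fun w : ℝ => 1 + |r * w|) n (gaussianReal μ v) :=
    hone.add (hid.const_mul r).norm
  refine hlin.integrable_norm_pow'.congr (ae_of_all _ fun w => ?_)
  simp only [Real.norm_of_nonneg (by positivity : 0 ≤ 1 + |r * w|)]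

lemma integrable_pow_gaussianReal (μ : ℝ) (v : ℝ≥0) (n : ℕ) :
    Integrable (fun w => w ^ n) (gaussianReal μ v) := by
  refine (integrable_one_add_abs_mul_pow_gaussianReal μ v 1 n).mono'
    (measurable_id.pow_const n).aestronglyMeasurable (ae_of_all _ fun w => ?_)
  rw [norm_pow, one_mul, Real.norm_eq_abs]
  gcongr
  linarith

lemma integrable_truncatedPow_gaussianReal_prod {k : ℕ} (hk : 1 ≤ k) (μ : ℝ) (v : ℝ≥0) (r : ℝ)
    (m : Measure ℝ) [IsFiniteMeasure m] :
    Integrable (fun z : ℝ × ℝ => truncatedPow k (r * z.1) z.2) ((gaussianReal μ v).prod m) := by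
  refine ((integrable_one_add_abs_mul_pow_gaussianReal μ v r (2 * k)).comp_fst m).mono'
    ((measurable_truncatedPow k).comp (by fun_prop :
      Measurable fun z : ℝ × ℝ => (r * z.1, z.2))).aestronglyMeasurable (ae_of_all _ fun z => ?_)
  exact (abs_truncatedPow_le hk _ _).trans
    (mul_le_of_le_one_right (by positivity) (jumpWeight_le_one _))

lemma abs_integral_gaussianReal_comp_mul_sub_le {F : ℝ → ℝ} {A a b c r : ℝ} {n : ℕ}
    (hF : Integrable (fun w => F (r * w)) (gaussianReal 0 1))
    (hbound : ∀ w, |F w + F (-w) - 2 * A| ≤ a + b * w ^ 2 + c * w ^ n) :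
    |(∫ w, F (r * w) ∂gaussianReal 0 1) - A| ≤
      (a + b * r ^ 2 * (∫ w, w ^ 2 ∂gaussianReal 0 1) +
        c * r ^ n * ∫ w, w ^ n ∂gaussianReal 0 1) / 2 := by
  have hneg := isNegInvariant_gaussianReal_zero 1
  have hsq : Integrable (fun w => b * r ^ 2 * w ^ 2) (gaussianReal 0 1) :=
    (integrable_pow_gaussianReal 0 1 2).const_mul _
  have hpow : Integrable (fun w => c * r ^ n * w ^ n) (gaussianReal 0 1) :=
    (integrable_pow_gaussianReal 0 1 n).const_mul _
  have hconst : Integrable (fun w => a + b * r ^ 2 * w ^ 2) (gaussianReal 0 1) :=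
    (integrable_const a).add hsq
  have hsum : Integrable (fun w => a + b * r ^ 2 * w ^ 2 + c * r ^ n * w ^ n) (gaussianReal 0 1) :=
    hconst.add hpow
  have hmean := abs_integral_sub_le_of_abs_add_neg_sub_le (A := A) hF hsum
    fun w => by simpa only [mul_pow, mul_neg, mul_assoc] using hbound (r * w)
  rwa [integral_add hconst hpow, integral_add (integrable_const a) hsq, integral_const,
    probReal_univ, one_smul, integral_const_mul, integral_const_mul] at hmean

section GaussianAverage

variable {Y Cp Cm : ℝ} {k : ℕ} (hCp : 0 ≤ Cp) (hCm : 0 ≤ Cm)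

include hCp hCm

lemma exists_abs_integral_gaussianReal_truncatedPow_sub_le (hY0 : 0 < Y) (hY2 : Y < 2)
    (hk : 1 ≤ k) (R : ℝ) :
    ∃ C, 0 ≤ C ∧ ∀ (κ : ℝ → ℝ) (m : Measure ℝ) [IsProbabilityMeasure m] (c t r : ℝ),
      IsLevyDensity κ → (∀ u, charFun m u = Complex.exp (levyExponent c κ u)) → 0 ≤ t →
      |r| ≤ R →
      |(∫ w, ∫ v, truncatedPow k (r * w) v ∂m ∂gaussianReal 0 1) -
          t * ((Cp + Cm) / (2 * k - Y))| ≤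
        C * (levySize c κ ^ 2 + t * levySize c κ +
          (∫ v, jumpWeight v * |κ v - t * stableDensity Y Cp Cm v|) +
          (t + levySize c κ) * r ^ 2) := by
  obtain ⟨C, hC, hsym⟩ := exists_abs_integral_truncatedPow_add_neg_sub_le hCp hCm hY0 hY2 hk
  set M₂ := ∫ w, w ^ 2 ∂gaussianReal 0 1
  set Mₖ := ∫ w, w ^ (2 * k + 2) ∂gaussianReal 0 1
  have : 0 ≤ M₂ := integral_nonneg sq_nonneg
  have hMₖ : 0 ≤ Mₖ := integral_nonneg (Even.pow_nonneg (by simp [parity_simps]))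
  have hR := (even_two_mul k).pow_nonneg R
  refine ⟨C * (1 + M₂ + R ^ (2 * k) * Mₖ), by positivity, fun κ m _ c t r hκ hm ht hr => ?_⟩
  set T := levySize c κ
  set δ := ∫ v, jumpWeight v * |κ v - t * stableDensity Y Cp Cm v|
  have hT : 0 ≤ T := hκ.levySize_nonneg c
  have hδ : 0 ≤ δ := integral_nonneg fun v => mul_nonneg (jumpWeight_nonneg v) (abs_nonneg _)
  have hr0 : 0 ≤ r ^ (2 * k + 2) := Even.pow_nonneg (by simp [parity_simps]) r
  have hrR : r ^ (2 * k) ≤ R ^ (2 * k) := by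
    rw [← Even.pow_abs (even_two_mul k) r]
    gcongr
  have hmean := abs_integral_gaussianReal_comp_mul_sub_le
    (F := fun w => ∫ v, truncatedPow k w v ∂m) (a := C * (T ^ 2 + t * T + δ)) (b := C * t)
    (c := C * T) (n := 2 * k + 2)
    (integrable_truncatedPow_gaussianReal_prod hk 0 1 r m).integral_prod_left
    fun w => (hsym κ m c t w hκ hm ht).trans_eq (by ring)
  refine hmean.trans ((half_le_self (by positivity)).trans ?_)
  calc C * (T ^ 2 + t * T + δ) + C * t * r ^ 2 * M₂ + C * T * r ^ (2 * k + 2) * Mₖ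
      ≤ C * (T ^ 2 + t * T + δ) + C * t * r ^ 2 * M₂ + C * T * (R ^ (2 * k) * r ^ 2) * Mₖ := by
        rw [pow_add r]
        gcongr
    _ ≤ C * (1 + M₂ + R ^ (2 * k) * Mₖ) * (T ^ 2 + t * T + δ + (t + T) * r ^ 2) := by
        have hextra : 0 ≤ C * ((T ^ 2 + t * T + δ) * (M₂ + R ^ (2 * k) * Mₖ) + (t + T) * r ^ 2 +
          T * r ^ 2 * M₂ + t * r ^ 2 * (R ^ (2 * k) * Mₖ)) := by positivity
        linarith

end GaussianAverage

/-! ### Truncated moments of the jump part -/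

section RescaledJumps

variable {Y Cp Cm M : ℝ} {q : ℝ → ℝ} (hCp : 0 ≤ Cp) (hCm : 0 ≤ Cm) (hq : Measurable q)
  (hq0 : ∀ x, 0 ≤ q x)

include hCp hCm hq hq0

omit hq in
lemma exists_levySize_rescaled_le (hY1 : 1 < Y) (hY2 : Y < 2) (hqM : ∀ x, q x ≤ M) (b : ℝ) :
    ∃ C, 0 ≤ C ∧ ∀ h e : ℝ, 0 ≤ h → 0 < e → e ≤ 1 →
      levySize (rescaledDrift b Y Cp Cm q h e) (rescaledDensity Y Cp Cm q h e) ≤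
        C * (h * e ^ (-Y)) := by
  exact ⟨_, abs_nonneg _, fun h e hh he he1 =>
    (levySize_rescaled_le hCp hCm hq0 hY1 hY2 hqM hh he he1 b).trans
      (mul_le_mul_of_nonneg_right (le_abs_self _) (by positivity))⟩

omit hq in
lemma exists_integral_jumpWeight_mul_abs_rescaledDensity_sub_le (hY1 : 1 < Y) (hY2 : Y < 2)
    (hqM : ∀ x, q x ≤ M) {αp αm : ℝ}
    (hp : IntegrableOn (fun x => |q x - 1 - αp * x| * x ^ (-Y - 1)) (Ioc 0 1))
    (hm : IntegrableOn (fun x => |q x - 1 - αm * x| * |x| ^ (-Y - 1)) (Ico (-1) 0)) :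
    ∃ C, 0 ≤ C ∧ ∀ h e : ℝ, 0 ≤ h → 0 < e → e ≤ 1 →
      ∫ v, jumpWeight v *
          |rescaledDensity Y Cp Cm q h e v - h * e ^ (-Y) * stableDensity Y Cp Cm v| ≤
        h * e ^ (-Y) * (C * e) := by
  obtain ⟨G, K, hG, hG0, hqG⟩ := exists_abs_sub_one_mul_stableDensity_le hCp hCm hq0 hqM hp hm
  exact ⟨_, abs_nonneg _, fun h e hh he he1 =>
    (integral_jumpWeight_mul_abs_rescaledDensity_sub hCp hCm hh he).trans_le
      (mul_le_mul_of_nonneg_left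
        ((integral_jumpWeight_mul_abs_sub_one_le hCp hCm hY1 hY2 hG hG0 hqG he he1).trans
          (mul_le_mul_of_nonneg_right (le_abs_self _) he.le)) (by positivity))⟩

lemma exists_abs_integral_truncatedPow_rescaled_sub_le (hY1 : 1 < Y) (hY2 : Y < 2)
    (hqM : ∀ x, q x ≤ M) {αp αm : ℝ}
    (hp : IntegrableOn (fun x => |q x - 1 - αp * x| * x ^ (-Y - 1)) (Ioc 0 1))
    (hm : IntegrableOn (fun x => |q x - 1 - αm * x| * |x| ^ (-Y - 1)) (Ico (-1) 0))
    {k : ℕ} (hk : 1 ≤ k) (b R : ℝ) :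
    ∃ C, 0 ≤ C ∧ ∀ (m : Measure ℝ) [IsProbabilityMeasure m] (h e r : ℝ), 0 ≤ h → 0 < e →
      e ≤ 1 → |r| ≤ R → (∀ u, charFun m u = Complex.exp (h * psiJ b Y Cp Cm q (e⁻¹ * u))) →
      |(∫ w, ∫ v, truncatedPow k (r * w) v ∂m ∂gaussianReal 0 1) -
          h * e ^ (-Y) * ((Cp + Cm) / (2 * k - Y))| ≤
        C * (h * e ^ (-Y) * (h * e ^ (-Y) + e + r ^ 2)) := by
  have hY0 : 0 < Y := by linarith
  obtain ⟨C₀, hC₀, hmain⟩ :=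
    exists_abs_integral_gaussianReal_truncatedPow_sub_le hCp hCm hY0 hY2 hk R
  obtain ⟨C₁, hC₁, hsize⟩ := exists_levySize_rescaled_le hCp hCm hq0 hY1 hY2 hqM b
  obtain ⟨C₂, hC₂, hdist⟩ := exists_integral_jumpWeight_mul_abs_rescaledDensity_sub_le hCp hCm hq0
    hY1 hY2 hqM hp hm
  refine ⟨C₀ * (C₁ ^ 2 + C₁ + C₂ + 1), by positivity, fun m _ h e r hh he he1 hr hcf => ?_⟩
  set t := h * e ^ (-Y)
  have ht : 0 ≤ t := by positivity
  have hκ : IsLevyDensity (rescaledDensity Y Cp Cm q h e) :=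
    isLevyDensity_rescaledDensity hCp hCm hq hq0 hY0 hY2 hqM hh he
  have hsize0 := hκ.levySize_nonneg (rescaledDrift b Y Cp Cm q h e)
  have hcf' (u : ℝ) := (hcf u).trans (congrArg Complex.exp
    (mul_psiJ_eq_levyExponent hCp hCm hq hq0 hY0 hY2 hqM hh he he1 b u))
  refine (hmain _ m _ t r hκ hcf' ht hr).trans ?_
  calc _ ≤ C₀ * ((C₁ * t) ^ 2 + t * (C₁ * t) + t * (C₂ * e) + (t + C₁ * t) * r ^ 2) := by
        gcongr
        exacts [hsize h e hh he he1, hsize h e hh he he1, hdist h e hh he he1,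
          hsize h e hh he he1]
    _ ≤ C₀ * (C₁ ^ 2 + C₁ + C₂ + 1) * (t * (t + e + r ^ 2)) := by
        have hextra : 0 ≤ C₀ * ((C₂ + 1) * t ^ 2 + (C₁ ^ 2 + C₁ + 1) * (t * e) +
          (C₁ ^ 2 + C₂) * (t * r ^ 2)) := by positivity
        linarith

end RescaledJumps

lemma pow_mul_truncatedPow (k : ℕ) {e : ℝ} (he : 0 < e) (w v : ℝ) :
    e ^ (2 * k) * truncatedPow k (w / e) (e⁻¹ * v) =
      v ^ (2 * k) * indicator {x | |x| ≤ e} (fun _ => 1) (w + v) := by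
  have hmem : |w / e + e⁻¹ * v| ≤ 1 ↔ |w + v| ≤ e := by
    rw [inv_mul_eq_div, ← add_div, abs_div, abs_of_pos he, div_le_one he]
  rw [truncatedPow, ← mul_assoc, ← mul_pow, mul_inv_cancel_left₀ he.ne']
  simp only [indicator_apply, mem_ofPred_eq, hmem]

section GaussianPerturbation

variable {Ω : Type*} [MeasurableSpace Ω] {P : Measure Ω} [IsProbabilityMeasure P] {X W : Ω → ℝ}

lemma integral_pow_mul_indicator_eq_truncatedPow (hX : Measurable X) (hW : Measurable W)
    (hWlaw : P.map W = gaussianReal 0 1) (hWX : IndepFun W X P) {k : ℕ} (hk : 1 ≤ k) (s : ℝ)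
    {e : ℝ} (he : 0 < e) :
    ∫ ω, X ω ^ (2 * k) * indicator {x | |x| ≤ e} (fun _ => 1) (s * W ω + X ω) ∂P =
      e ^ (2 * k) * ∫ w, ∫ v, truncatedPow k (s / e * w) v ∂P.map (fun ω => e⁻¹ * X ω)
        ∂gaussianReal 0 1 := by
  have hXe : Measurable fun ω => e⁻¹ * X ω := hX.const_mul _
  have := Measure.isProbabilityMeasure_map (μ := P) hXe.aemeasurable
  have hindep : IndepFun W (fun ω => e⁻¹ * X ω) P :=
    hWX.comp measurable_id (measurable_const_mul e⁻¹)
  have hlaw := (indepFun_iff_map_prod_eq_prod_map_map hW.aemeasurable hXe.aemeasurable).1 hindep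
  have hint := integrable_truncatedPow_gaussianReal_prod hk 0 1 (s / e) (P.map fun ω => e⁻¹ * X ω)
  rw [← integral_prod _ hint, ← hWlaw, ← hlaw, integral_map (hW.prodMk hXe).aemeasurable
    (by rw [hlaw, hWlaw]; exact hint.aestronglyMeasurable), ← integral_const_mul]
  congr with ω
  rw [← pow_mul_truncatedPow k he, div_mul_eq_mul_div]

omit [IsProbabilityMeasure P] in
lemma charFun_map_const_mul_eq_integral (hX : Measurable X) (a u : ℝ) :
    charFun (P.map fun ω => a * X ω) u =
      ∫ ω, Complex.exp (Complex.I * (a * u : ℝ) * X ω) ∂P := by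
  rw [charFun_apply_real, integral_map (hX.const_mul a).aemeasurable (by fun_prop)]
  congr with ω
  congr 1
  push_cast
  ring

end GaussianPerturbation

lemma pow_mul_rescaled_error_le {Y h e : ℝ} (hY2 : Y < 2) (hh : 0 ≤ h)
    (he : 0 < e) (he1 : e ≤ 1) (k : ℕ) (σ : ℝ) :
    e ^ (2 * k) * (h * e ^ (-Y) * (h * e ^ (-Y) + e + (σ * √h / e) ^ 2)) ≤
      (1 + σ ^ 2) * (h ^ 2 * e ^ (2 * (k : ℝ) - Y - 2) + h * e ^ (2 * (k : ℝ) - Y / 2)) := by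
  have hmul (x : ℝ) : e ^ (2 * k) * e ^ x = e ^ (2 * (k : ℝ) + x) := by
    rw [Real.rpow_add he, ← Real.rpow_natCast]
    push_cast
    rfl
  have hjump : e ^ (2 * k) * e ^ (-Y) * e ^ (-Y) ≤ e ^ (2 * (k : ℝ) - Y - 2) := by
    rw [hmul, ← Real.rpow_add he]
    exact Real.rpow_le_rpow_of_exponent_ge he he1 (by linarith)
  have htemper : e ^ (2 * k) * e ^ (-Y) * e ≤ e ^ (2 * (k : ℝ) - Y / 2) := by
    rw [hmul, ← Real.rpow_add_one he.ne']
    exact Real.rpow_le_rpow_of_exponent_ge he he1 (by linarith)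
  have hgauss : e ^ (2 * k) * e ^ (-Y) * (e ^ 2)⁻¹ = e ^ (2 * (k : ℝ) - Y - 2) := by
    rw [hmul, ← Real.rpow_natCast, ← Real.rpow_neg he.le, ← Real.rpow_add he]
    push_cast
    ring_nf
  calc e ^ (2 * k) * (h * e ^ (-Y) * (h * e ^ (-Y) + e + (σ * √h / e) ^ 2))
      = h ^ 2 * (e ^ (2 * k) * e ^ (-Y) * e ^ (-Y)) + h * (e ^ (2 * k) * e ^ (-Y) * e) +
          σ ^ 2 * (h ^ 2 * (e ^ (2 * k) * e ^ (-Y) * (e ^ 2)⁻¹)) := by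
        rw [div_pow, mul_pow, Real.sq_sqrt hh, div_eq_mul_inv]
        ring
    _ ≤ h ^ 2 * e ^ (2 * (k : ℝ) - Y - 2) + h * e ^ (2 * (k : ℝ) - Y / 2) +
          σ ^ 2 * (h ^ 2 * e ^ (2 * (k : ℝ) - Y - 2)) := by
        rw [hgauss]
        gcongr
    _ ≤ (1 + σ ^ 2) * (h ^ 2 * e ^ (2 * (k : ℝ) - Y - 2) + h * e ^ (2 * (k : ℝ) - Y / 2)) := by
        have hextra : 0 ≤ σ ^ 2 * (h * e ^ (2 * (k : ℝ) - Y / 2)) := by positivity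
        linarith

lemma exists_abs_integral_truncated_jump_sub_le {Y Cp Cm M : ℝ} {q : ℝ → ℝ} (hY1 : 1 < Y)
    (hY2 : Y < 2) (hCp : 0 ≤ Cp) (hCm : 0 ≤ Cm) (hq : Measurable q) (hq0 : ∀ x, 0 ≤ q x)
    (hqM : ∀ x, q x ≤ M) {αp αm : ℝ}
    (hp : IntegrableOn (fun x => |q x - 1 - αp * x| * x ^ (-Y - 1)) (Ioc 0 1))
    (hm : IntegrableOn (fun x => |q x - 1 - αm * x| * |x| ^ (-Y - 1)) (Ico (-1) 0))
    {k : ℕ} (hk : 1 ≤ k) (b σ K : ℝ) :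
    ∃ C, 0 ≤ C ∧ ∀ {Ω : Type*} [MeasurableSpace Ω] (P : Measure Ω) [IsProbabilityMeasure P]
      (X W : Ω → ℝ) (h e : ℝ), Measurable X → Measurable W → P.map W = gaussianReal 0 1 →
      IndepFun W X P → (∀ u : ℝ, ∫ ω, Complex.exp (Complex.I * u * X ω) ∂P =
        Complex.exp (h * psiJ b Y Cp Cm q u)) → 0 ≤ h → 0 < e → e ≤ 1 → √h ≤ K * e →
      |(∫ ω, X ω ^ (2 * k) * indicator {x | |x| ≤ e} (fun _ => 1) (σ * √h * W ω + X ω) ∂P) -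
          (Cp + Cm) / (2 * k - Y) * h * e ^ (2 * (k : ℝ) - Y)| ≤
        C * (h ^ 2 * e ^ (2 * (k : ℝ) - Y - 2) + h * e ^ (2 * (k : ℝ) - Y / 2)) := by
  obtain ⟨C, hC, hmain⟩ := exists_abs_integral_truncatedPow_rescaled_sub_le hCp hCm hq hq0 hY1 hY2
    hqM hp hm hk b (|σ| * K)
  refine ⟨C * (1 + σ ^ 2), by positivity, fun P _ X W h e hX hW hWlaw hWX hcf hh he he1 hhe => ?_⟩
  set m := P.map fun ω => e⁻¹ * X ω
  have : IsProbabilityMeasure m := Measure.isProbabilityMeasure_map (hX.const_mul _).aemeasurable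
  have hr : |σ * √h / e| ≤ |σ| * K := by
    rw [abs_div, abs_mul, abs_of_nonneg (Real.sqrt_nonneg h), abs_of_pos he, mul_div_assoc]
    gcongr
    exact (div_le_iff₀ he).2 hhe
  have hlead : (Cp + Cm) / (2 * k - Y) * h * e ^ (2 * (k : ℝ) - Y) =
      e ^ (2 * k) * (h * e ^ (-Y) * ((Cp + Cm) / (2 * k - Y))) := by
    rw [sub_eq_add_neg (2 * (k : ℝ)) Y, Real.rpow_add he, ← Real.rpow_natCast]
    push_cast
    ring
  rw [integral_pow_mul_indicator_eq_truncatedPow hX hW hWlaw hWX hk _ he, hlead, ← mul_sub, abs_mul,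
    abs_of_pos (by positivity)]
  calc _ ≤ e ^ (2 * k) * (C * (h * e ^ (-Y) * (h * e ^ (-Y) + e + (σ * √h / e) ^ 2))) := by
        gcongr
        exact hmain m h e _ hh he he1 hr fun u =>
          (charFun_map_const_mul_eq_integral hX _ u).trans (hcf _)
    _ ≤ C * (1 + σ ^ 2) *
          (h ^ 2 * e ^ (2 * (k : ℝ) - Y - 2) + h * e ^ (2 * (k : ℝ) - Y / 2)) := by
        rw [mul_left_comm, mul_assoc C]
        exact mul_le_mul_of_nonneg_left (pow_mul_rescaled_error_le hY2 hh he he1 k σ) hC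

section ErrorSplitting

variable {α E F G : Type*} [SeminormedAddCommGroup E] [SeminormedAddCommGroup F]
  [SeminormedAddCommGroup G] {l : Filter α} {f : α → E} {a : α → F} {b : α → G}

lemma isBigO_indicator_of_norm_le (hf : f =O[l] fun x => ‖a x‖ + ‖b x‖) {s : Set α}
    (hs : ∀ x ∈ s, ‖b x‖ ≤ ‖a x‖) : s.indicator f =O[l] a := by
  obtain ⟨C, hC, hfC⟩ := hf.exists_nonneg
  refine .of_bound (2 * C) ?_
  filter_upwards [hfC.bound] with x hx
  by_cases hxs : x ∈ s
  · rw [Real.norm_of_nonneg (by positivity)] at hx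
    rw [indicator_of_mem hxs]
    linarith [mul_le_mul_of_nonneg_left (hs x hxs) hC]
  · rw [indicator_of_notMem hxs, norm_zero]
    positivity

lemma exists_eq_add_isBigO_of_isBigO_norm_add_norm (hf : f =O[l] fun x => ‖a x‖ + ‖b x‖) :
    ∃ f₁ f₂ : α → E, (∀ x, f x = f₁ x + f₂ x) ∧ f₁ =O[l] a ∧ f₂ =O[l] b := by
  set s := {x | ‖b x‖ ≤ ‖a x‖}
  have hf' : f =O[l] fun x => ‖b x‖ + ‖a x‖ := by simpa only [add_comm] using hf
  exact ⟨s.indicator f, sᶜ.indicator f, fun x => (congrFun (s.indicator_self_add_compl f) x).symm,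
    isBigO_indicator_of_norm_le hf fun _ => id,
    isBigO_indicator_of_norm_le hf' fun _ (hx : ¬_) => (not_le.1 hx).le⟩

end ErrorSplitting

lemma isBigO_of_tendsto_div_atTop {α : Type*} {l : Filter α} {f g : α → ℝ}
    (h : Tendsto (fun x => f x / g x) l atTop) : g =O[l] f := by
  refine isBigO_of_div_tendsto_nhds ?_ 0 (h.inv_tendsto_atTop.congr fun x => inv_div _ _)
  filter_upwards [h.eventually_ne_atTop 0] with x hx hf
  exact absurd (by rw [hf, zero_div]) hx

theorem truncated_jump_even_moments_general
    {Ω : Type*} [MeasurableSpace Ω] (P : Measure Ω) [IsProbabilityMeasure P]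
    {Y Cp Cm M αp αm : ℝ} (σ b : ℝ) {q : ℝ → ℝ} (hY1 : 1 < Y) (hY2 : Y < 2)
    (hCp : 0 ≤ Cp) (hCm : 0 ≤ Cm) (hq : Measurable q) (hq0 : ∀ x, 0 ≤ q x) (hqM : ∀ x, q x ≤ M)
    (hp : IntegrableOn (fun x => |q x - 1 - αp * x| * x ^ (-Y - 1)) (Ioc 0 1))
    (hm : IntegrableOn (fun x => |q x - 1 - αm * x| * |x| ^ (-Y - 1)) (Ico (-1) 0))
    {J : ℝ → Ω → ℝ} {W : Ω → ℝ} (hW : Measurable W) (hWlaw : P.map W = gaussianReal 0 1)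
    (hJ : ∀ h, Measurable (J h))
    (hJcf : ∀ h : ℝ, 0 < h → ∀ u : ℝ,
      ∫ ω, Complex.exp (Complex.I * u * J h ω) ∂P = Complex.exp (h * psiJ b Y Cp Cm q u))
    (hindep : ∀ h, 0 < h → IndepFun W (J h) P) {k : ℕ} (hk : 1 ≤ k)
    {ε : ℝ → ℝ} (hεpos : ∀ h, 0 < h → 0 < ε h) (hε0 : Tendsto ε (𝓝[>] 0) (𝓝 0))
    (hεsqrt : (fun h => √h) =O[𝓝[>] 0] ε) :
    ∃ R₁ R₂ : ℝ → ℝ,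
      (∀ h, 0 < h →
        ∫ ω, J h ω ^ (2 * k) * indicator {x | |x| ≤ ε h} (fun _ => 1)
            (σ * √h * W ω + J h ω) ∂P =
          (Cp + Cm) / (2 * k - Y) * h * ε h ^ (2 * (k : ℝ) - Y) + R₁ h + R₂ h) ∧
      R₁ =O[𝓝[>] 0] (fun h => h ^ 2 * ε h ^ (2 * (k : ℝ) - Y - 2)) ∧
      R₂ =O[𝓝[>] 0] (fun h => h * ε h ^ (2 * (k : ℝ) - Y / 2)) := by
  obtain ⟨K, hK⟩ := hεsqrt.bound
  obtain ⟨C, hC, hmain⟩ := exists_abs_integral_truncated_jump_sub_le hY1 hY2 hCp hCm hq hq0 hqM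
    hp hm hk b σ K
  have herror : (fun h => (∫ ω, J h ω ^ (2 * k) * indicator {x | |x| ≤ ε h} (fun _ => 1)
        (σ * √h * W ω + J h ω) ∂P) - (Cp + Cm) / (2 * k - Y) * h * ε h ^ (2 * (k : ℝ) - Y))
      =O[𝓝[>] 0] fun h =>
        ‖h ^ 2 * ε h ^ (2 * (k : ℝ) - Y - 2)‖ + ‖h * ε h ^ (2 * (k : ℝ) - Y / 2)‖ := by
    refine .of_bound C ?_
    filter_upwards [hK, hε0.eventually_le_const one_pos, self_mem_nhdsWithin] with h hsqrt he1 hh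
    have he : 0 < ε h := hεpos h hh
    rw [Real.norm_of_nonneg (Real.sqrt_nonneg h), Real.norm_of_nonneg he.le] at hsqrt
    have hbound := hmain P (J h) W h (ε h) (hJ h) hW hWlaw (hindep h hh) (hJcf h hh)
      (mem_Ioi.1 hh).le he he1 hsqrt
    rw [Real.norm_eq_abs, Real.norm_of_nonneg (add_nonneg (norm_nonneg _) (norm_nonneg _))]
    exact hbound.trans (by gcongr <;> exact le_abs_self _)
  obtain ⟨R₁, R₂, hR, hR₁, hR₂⟩ := exists_eq_add_isBigO_of_isBigO_norm_add_norm herror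
  exact ⟨R₁, R₂, fun h _ => (sub_eq_iff_eq_add'.1 (hR h)).trans (add_assoc _ _ _).symm, hR₁, hR₂⟩

/-- Lemma C.5: `E(J_h^{2k} 1_{|σW_h + J_h| ≤ ε}) =
((C₊+C₋)/(2k−Y)) h ε^{2k−Y} + O(h² ε^{2k−Y−2}) + O(h ε^{2k−Y/2})`. -/
theorem truncated_jump_even_moments
    {Ω : Type*} [MeasurableSpace Ω] (P : Measure Ω) [IsProbabilityMeasure P]
    (Y Cp Cm σ b : ℝ) (q : ℝ → ℝ)
    (hY1 : 1 < Y) (hY2 : Y < 2)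
    (hCp : 0 < Cp) (hCm : 0 < Cm) (hσ : 0 < σ)
    (hq_meas : Measurable q) (hq_nonneg : ∀ x, 0 ≤ q x)
    (hq_bdd : ∃ M : ℝ, ∀ x, q x ≤ M)
    (hq_lim : Tendsto q (𝓝[≠] (0 : ℝ)) (𝓝 1))
    (hq_taylor : ∃ αp αm : ℝ, αp ≠ 0 ∧ αm ≠ 0 ∧
      IntegrableOn (fun x => |q x - 1 - αp * x| * x ^ (-Y - 1)) (Set.Ioc (0 : ℝ) 1) ∧
      IntegrableOn (fun x => |q x - 1 - αm * x| * |x| ^ (-Y - 1)) (Set.Ico (-1 : ℝ) 0))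
    (hq_log : ∃ K M : ℝ, ∀ x : ℝ, M ≤ |x| → |Real.log (q x)| ≤ K * |x|)
    (hq_inf : ∀ ε : ℝ, 0 < ε → ∃ c : ℝ, 0 < c ∧ ∀ x : ℝ, x ≠ 0 → |x| < ε → c ≤ q x)
    (hq_sq : IntegrableOn (fun x => q x ^ 2 * |x| ^ (-1 - Y)) {x : ℝ | 1 < |x|})
    -- the jump part `J` and the Brownian part `W`
    (J : ℝ → Ω → ℝ) (W : Ω → ℝ)
    (hWmeas : Measurable W) (hW : P.map W = gaussianReal 0 1)
    (hJmeas : ∀ h : ℝ, Measurable (J h))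
    (hJcf : ∀ h : ℝ, 0 < h → ∀ u : ℝ,
      ∫ ω, Complex.exp (Complex.I * u * J h ω) ∂P = Complex.exp (h * psiJ b Y Cp Cm q u))
    (hindep : ∀ h : ℝ, 0 < h → IndepFun W (J h) P)
    (k : ℕ) (hk : 1 ≤ k)
    -- the threshold `ε = ε(h)`
    (ε : ℝ → ℝ) (hεpos : ∀ h : ℝ, 0 < h → 0 < ε h)
    (hε0 : Tendsto ε (𝓝[>] (0 : ℝ)) (𝓝 0))
    (hεsqrt : Tendsto (fun h => ε h / Real.sqrt h) (𝓝[>] (0 : ℝ)) atTop) :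
    ∃ R₁ R₂ : ℝ → ℝ,
      (∀ h : ℝ, 0 < h →
        (∫ ω, (J h ω) ^ (2 * k) *
            Set.indicator {x : ℝ | |x| ≤ ε h} (fun _ => (1 : ℝ))
              (σ * Real.sqrt h * W ω + J h ω) ∂P)
          = (Cp + Cm) / (2 * k - Y) * h * ε h ^ (2 * (k : ℝ) - Y) + R₁ h + R₂ h) ∧
      R₁ =O[𝓝[>] (0 : ℝ)] (fun h => h ^ 2 * ε h ^ (2 * (k : ℝ) - Y - 2)) ∧
      R₂ =O[𝓝[>] (0 : ℝ)] (fun h => h * ε h ^ (2 * (k : ℝ) - Y / 2)) := by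
  obtain ⟨M, hqM⟩ := hq_bdd
  obtain ⟨αp, αm, -, -, hp, hm⟩ := hq_taylor
  exact truncated_jump_even_moments_general P σ b hY1 hY2 hCp.le hCm.le hq_meas hq_nonneg hqM hp hm
    hWmeas hW hJmeas hJcf hindep hk hεpos hε0 (isBigO_of_tendsto_div_atTop hεsqrt)

end
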